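/- Let T > 0, β ∈ (0,1), v = (a,b,0) and v̄ = (ā,b̄,0) in B(R,λ,1), f, f̄ ∈ C^{1,1/2}(ℝ×[0,T]), and u_0, ū_0 Lipschitz continuous bounded functions on ℝ. If u and ū are the bounded solutions in C^{2,1}(ℝ×(0,T]) ∩ C^{1,1/2}(ℝ×[0,T]) of L_{[v]}u = f on ℝ×(0,T] with u(·,0) = u_0, and L_{[v̄]}ū = f̄ on ℝ×(0,T] with ū(·,0) = ū_0, respectively, then there is a constant K = K(R,λ,T,‖u_0‖_1), depending continuously on T, such that ‖u − ū‖_{1,1/2} ≤ K[ ‖v−v̄‖_{1,1/2} + ‖v−v̄‖_{1,1/2}^β + ‖u_0−ū_0‖_1 + T^{1/2}(‖f‖_{1,1/2}+1)(‖f−f̄‖_{1,1/2} + ‖v−v̄‖_{1,1/2} + ‖v−v̄‖_{1,1/2}^β) ]. -/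

import Mathlib

/-!
Only maximum principles are used; no fundamental solution and no Schauder theory. The difference
`w = u - ū` solves `w_t - ā w_xx + b̄ w_x = g` with
`g = (f - f̄) + (a - ā) u_xx - (b - b̄) u_x`, so two things are needed: a bound `|g| ≤ G / √t` with
`G` linear in the data differences, and a `C^{1,1/2}` estimate for solutions whose source has such
an integrable singularity at the initial time.

* Lipschitz bound in space (`lip_upper`): double the space variable and compare `w(x,t) - w(y,t)`,
  for `y < x`, with `e^{Lt} (M₀ r + A r √t / (r + √t))`, `r = x - y`. The profile `r √t / (r + √t)`
  is increasing and concave in `r`, and it is a supersolution of `ψ_t - 2λ ψ_rr = c / √t`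
  (`profile_supersol`), which pays for the singular source.
* Hölder bound in time (`time_holder_upper`): compare with a paraboloid of width `√(t₁ - t₀)` plus
  `2G √t`, using the Lipschitz bound on the initial slice.
* Bound `√t |u_xx| ≤ C` (`uxx_bound`): the mixed second difference of `u` in two increments `y, z`
  is compared on a small parabolic box with `y z` times an affine function (`uxx_local`). This
  bounds `u_xx` at the centre by the Lipschitz constant of `u` plus a small multiple of the maximum
  of `|u_xx|` over the box. At a maximum point of `ω |u_xx|`, with `ω` comparable to the
  parabolic distance to the boundary of a large box, that maximum is controlled by the value at the
  centre, and the small multiple is absorbed.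

Only the sup bounds `|a - ā|, |b - b̄| ≤ ‖v - v̄‖` enter `G`, so the estimate holds without the
terms in `‖v - v̄‖^β`, which are nonnegative. The constant has a factor `1 / √T`, because the term
`‖v - v̄‖ ‖f‖` in `G` is compared with `√T (‖f‖ + 1) ‖v - v̄‖`.
-/

open MeasureTheory

noncomputable section

/-- Partial derivative in time of `u = u(x,t)`. -/
def pdT (u : ℝ → ℝ → ℝ) (x t : ℝ) : ℝ := deriv (fun s => u x s) t

/-- Partial derivative in space of `u = u(x,t)`. -/
def pdX (u : ℝ → ℝ → ℝ) (x t : ℝ) : ℝ := deriv (fun y => u y t) x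

/-- Second partial derivative in space of `u = u(x,t)`. -/
def pdXX (u : ℝ → ℝ → ℝ) (x t : ℝ) : ℝ := deriv (fun y => pdX u y t) x

/-- The class `C^{α,α/2}(S)`. -/
def HolderClass (S : Set (ℝ × ℝ)) (α : ℝ) (u : ℝ → ℝ → ℝ) : Prop :=
  ∃ C : ℝ, (∀ p ∈ S, |u p.1 p.2| ≤ C) ∧
    ∀ p ∈ S, ∀ q ∈ S,
      |u p.1 p.2 - u q.1 q.2| ≤ C * (|p.1 - q.1| ^ α + |p.2 - q.2| ^ (α / 2))

/-- The class `C^{2,1}(S)`. -/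
def C21 (S : Set (ℝ × ℝ)) (u : ℝ → ℝ → ℝ) : Prop :=
  (∀ p ∈ S,
      DifferentiableAt ℝ (fun y => u y p.2) p.1 ∧
      DifferentiableAt ℝ (fun y => pdX u y p.2) p.1 ∧
      DifferentiableAt ℝ (fun s => u p.1 s) p.2) ∧
  ContinuousOn (fun p : ℝ × ℝ => u p.1 p.2) S ∧
  ContinuousOn (fun p : ℝ × ℝ => pdX u p.1 p.2) S ∧
  ContinuousOn (fun p : ℝ × ℝ => pdXX u p.1 p.2) S ∧
  ContinuousOn (fun p : ℝ × ℝ => pdT u p.1 p.2) S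

/-- The norm `‖u‖_{1,1/2}` on `C^{1,1/2}(ℝ×[0,T])`. -/
def norm11 (T : ℝ) (u : ℝ → ℝ → ℝ) : ℝ :=
  sSup {r : ℝ | ∃ x t, 0 ≤ t ∧ t ≤ T ∧ r = |u x t|} +
  sSup {r : ℝ | ∃ x t x' t', 0 ≤ t ∧ t ≤ T ∧ 0 ≤ t' ∧ t' ≤ T ∧ ¬(x = x' ∧ t = t') ∧
    r = |u x t - u x' t'| / (|x - x'| + |t - t'| ^ (1/2 : ℝ))}

/-- The norm `‖g‖_1 = sup |g| + Lipschitz seminorm` for `g : ℝ → ℝ`. -/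
def norm1 (g : ℝ → ℝ) : ℝ :=
  sSup {r : ℝ | ∃ x, r = |g x|} +
  sSup {r : ℝ | ∃ x x', x ≠ x' ∧ r = |g x - g x'| / |x - x'|}

/-- `u` lies in `C^{1,1/2}(ℝ×[0,T])` with sup bound `C1` and Lipschitz/Hölder constant `C2`. -/
def inC (T C1 C2 : ℝ) (u : ℝ → ℝ → ℝ) : Prop :=
  (∀ x t, 0 ≤ t → t ≤ T → |u x t| ≤ C1) ∧
  ∀ x t x' t', 0 ≤ t → t ≤ T → 0 ≤ t' → t' ≤ T →
    |u x t - u x' t'| ≤ C2 * (|x - x'| + |t - t'| ^ (1/2 : ℝ))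

/-- `v = (a,b,0) ∈ B(R,λ,1)`. -/
def memB (T R lam : ℝ) (a b : ℝ → ℝ → ℝ) : Prop :=
  (∀ x t, 0 ≤ t → t ≤ T → lam ≤ a x t) ∧
  (∃ C1 C2 : ℝ, 0 ≤ C1 ∧ 0 ≤ C2 ∧ C1 + C2 < R ∧ inC T C1 C2 a) ∧
  (∃ C1 C2 : ℝ, 0 ≤ C1 ∧ 0 ≤ C2 ∧ C1 + C2 < R ∧ inC T C1 C2 b)

/-- `u` is a (bounded) solution in `C^{2,1}(ℝ×(0,T]) ∩ C^{1,1/2}(ℝ×[0,T])` of the Cauchy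
problem `L_{[(a,b,0)]} u = u_t - a u_{xx} + b u_x = f` on `ℝ×(0,T]`, `u(·,0) = u₀`. -/
def IsSolLin (T : ℝ) (a b f : ℝ → ℝ → ℝ) (u0 : ℝ → ℝ) (u : ℝ → ℝ → ℝ) : Prop :=
  C21 {p : ℝ × ℝ | 0 < p.2 ∧ p.2 ≤ T} u ∧
  HolderClass {p : ℝ × ℝ | 0 ≤ p.2 ∧ p.2 ≤ T} 1 u ∧
  (∀ x, u x 0 = u0 x) ∧
  (∀ x t, 0 < t → t ≤ T →
    pdT u x t - a x t * pdXX u x t + b x t * pdX u x t = f x t)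

/-- The distance `‖v - v̄‖_{1,1/2}` between coefficient pairs `(a,b,0)`, `(ā,b̄,0)`. -/
def vDist (T : ℝ) (a b abar bbar : ℝ → ℝ → ℝ) : ℝ :=
  max (norm11 T (fun x t => a x t - abar x t)) (norm11 T (fun x t => b x t - bbar x t))

end

/-! ### Calculus at a maximum point, and the estimate in time -/

section Estimates

open Set Filter Topology

theorem second_deriv_nonpos_of_isLocalMax {f f' : ℝ → ℝ} {c x : ℝ}
    (hf : ∀ᶠ y in 𝓝 x, HasDerivAt f (f' y) y) (hf' : HasDerivAt f' c x)
    (hmax : IsLocalMax f x) : c ≤ 0 := by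
  by_contra hc
  push Not at hc
  have hd : deriv f =ᶠ[𝓝 x] f' := hf.mono fun y hy => hy.deriv
  have h2 : deriv (deriv f) x = c := by rw [hd.deriv_eq, hf'.deriv]
  have h1 : deriv f x = 0 := hmax.deriv_eq_zero
  have hmin : IsLocalMin f x :=
    isLocalMin_of_deriv_deriv_pos (by rw [h2]; exact hc) h1 hf.self_of_nhds.continuousAt
  -- a point that is both a local maximum and a local minimum is a point of local constancy
  have hconst : f =ᶠ[𝓝 x] fun _ => f x := by
    filter_upwards [hmax, hmin] with y h3 h4 using le_antisymm h3 h4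
  have h5 : deriv f =ᶠ[𝓝 x] fun _ => 0 := by
    have := hconst.deriv
    simpa using this
  have h6 : deriv (deriv f) x = 0 := by rw [h5.deriv_eq]; simp
  linarith

theorem deriv_nonneg_of_left_max {f : ℝ → ℝ} {c s t : ℝ} (hs : s < t)
    (hf : HasDerivAt f c t) (h : ∀ r, s ≤ r → r ≤ t → f r ≤ f t) : 0 ≤ c := by
  have h1 := (hasDerivWithinAt_iff_tendsto_slope' (s := Iio t) (by simp)).1
    (hf.hasDerivWithinAt (s := Iio t))
  refine ge_of_tendsto h1 ?_
  filter_upwards [Ioo_mem_nhdsLT hs] with r hr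
  rw [slope_def_field]
  exact div_nonneg_of_nonpos (by linarith [h r hr.1.le hr.2.le]) (by linarith [hr.2])

theorem deriv_le_of_le_mul {θ : ℝ → ℝ} {d c h : ℝ} (hh : 0 < h)
    (hθ : HasDerivAt θ d 0) (h0 : θ 0 = 0) (h : ∀ z, 0 < z → z < h → θ z ≤ c * z) : d ≤ c := by
  have h1 := (hasDerivWithinAt_iff_tendsto_slope' (s := Ioi (0:ℝ)) (by simp)).1
    (hθ.hasDerivWithinAt (s := Ioi 0))
  refine le_of_tendsto h1 ?_
  filter_upwards [Ioo_mem_nhdsGT hh] with r hr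
  rw [slope_def_field, h0, sub_zero, sub_zero, div_le_iff₀ hr.1]
  exact h r hr.1 hr.2

/-- Parabolic `C^{1/2}` regularity in time from Lipschitz regularity in space: the solution is
compared with a paraboloid above the point `(x₀, t₀)` that moves up in time. -/
theorem time_holder_upper {T R G Λ Cw : ℝ} (hR : 0 ≤ R) (hG : 0 ≤ G) (hΛ : 0 ≤ Λ)
    {w wxx wx wt a g : ℝ → ℝ → ℝ}
    (hwx : ∀ x t, 0 < t → t ≤ T → HasDerivAt (fun y => w y t) (wx x t) x)
    (hwxx : ∀ x t, 0 < t → t ≤ T → HasDerivAt (fun y => wx y t) (wxx x t) x)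
    (hwt : ∀ x t, 0 < t → t ≤ T → HasDerivAt (fun s => w x s) (wt x t) t)
    (hcont : ContinuousOn (fun p : ℝ × ℝ => w p.1 p.2) {p | 0 ≤ p.2 ∧ p.2 ≤ T})
    (hbd : ∀ x t, 0 ≤ t → t ≤ T → |w x t| ≤ Cw)
    (ha0 : ∀ x t, 0 ≤ t → t ≤ T → 0 ≤ a x t) (haR : ∀ x t, 0 ≤ t → t ≤ T → a x t ≤ R)
    (heq : ∀ x t, 0 < t → t ≤ T → wt x t = a x t * wxx x t + g x t)
    (hg : ∀ x t, 0 < t → t ≤ T → |g x t| ≤ G / √t)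
    (hlip : ∀ x y t, 0 ≤ t → t ≤ T → |w x t - w y t| ≤ Λ * |x - y|)
    (x₀ : ℝ) {t₀ t₁ : ℝ} (ht₀ : 0 ≤ t₀) (h01 : t₀ < t₁) (ht₁ : t₁ ≤ T) :
    w x₀ t₁ - w x₀ t₀ ≤ (Λ * (1 + R) + 2 * G) * √(t₁ - t₀) := by
  set h := √(t₁ - t₀) with hh
  have hhpos : 0 < h := Real.sqrt_pos.2 (by linarith)
  have hsq : h ^ 2 = t₁ - t₀ := Real.sq_sqrt (by linarith)
  have key : ∀ ε : ℝ, 0 < ε → ∀ x t, t₀ ≤ t → t ≤ t₁ →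
      w x t - w x₀ t₀ - Λ * (h / 2 + ((x - x₀) ^ 2 + 2 * R * (t - t₀)) / (2 * h))
        - 2 * G * (√t - √t₀) - ε * (1 + (x - x₀) ^ 2 + (2 * R + 1) * (t - t₀)) ≤ 0 := by
    intro ε hε x' t' h0' h1'
    by_contra hcon
    push Not at hcon
    set F : ℝ × ℝ → ℝ := fun p =>
      w p.1 p.2 - w x₀ t₀ - Λ * (h / 2 + ((p.1 - x₀) ^ 2 + 2 * R * (p.2 - t₀)) / (2 * h))
        - 2 * G * (√p.2 - √t₀) - ε * (1 + (p.1 - x₀) ^ 2 + (2 * R + 1) * (p.2 - t₀)) with hF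
    have hsmall : ∀ p : ℝ × ℝ, t₀ ≤ p.2 → p.2 ≤ t₁ → 0 < F p → (p.1 - x₀) ^ 2 ≤ 2 * Cw / ε := by
      intro p hp0 hp1 hp
      have e1 := abs_le.1 (hbd p.1 p.2 (by linarith) (by linarith))
      have e2 := abs_le.1 (hbd x₀ t₀ (by linarith) (by linarith))
      have e3 : 0 ≤ Λ * (h / 2 + ((p.1 - x₀) ^ 2 + 2 * R * (p.2 - t₀)) / (2 * h)) := by
        have : 0 ≤ p.2 - t₀ := by linarith
        positivity
      have e4 : 0 ≤ 2 * G * (√p.2 - √t₀) := by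
        have : 0 ≤ √p.2 - √t₀ := by linarith [Real.sqrt_le_sqrt hp0]
        positivity
      have e5 : 0 ≤ ε * ((2 * R + 1) * (p.2 - t₀)) := by
        have : 0 ≤ p.2 - t₀ := by linarith
        positivity
      rw [le_div_iff₀ hε]
      simp only [hF] at hp
      nlinarith
    have hK : IsCompact (Icc (x₀ - √(2 * Cw / ε)) (x₀ + √(2 * Cw / ε)) ×ˢ Icc t₀ t₁) :=
      isCompact_Icc.prod isCompact_Icc
    have hmem : ∀ p : ℝ × ℝ, t₀ ≤ p.2 → p.2 ≤ t₁ → 0 < F p →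
        p ∈ Icc (x₀ - √(2 * Cw / ε)) (x₀ + √(2 * Cw / ε)) ×ˢ Icc t₀ t₁ := by
      intro p hp0 hp1 hp
      have := abs_le.1 (Real.abs_le_sqrt (hsmall p hp0 hp1 hp))
      exact ⟨⟨by linarith, by linarith⟩, hp0, hp1⟩
    have hFc : ContinuousOn F (Icc (x₀ - √(2 * Cw / ε)) (x₀ + √(2 * Cw / ε)) ×ˢ Icc t₀ t₁) := by
      have e1 : ContinuousOn (fun p : ℝ × ℝ => w p.1 p.2)
          (Icc (x₀ - √(2 * Cw / ε)) (x₀ + √(2 * Cw / ε)) ×ˢ Icc t₀ t₁) :=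
        hcont.mono fun p hp => ⟨by linarith [hp.2.1], by linarith [hp.2.2]⟩
      have e2 : Continuous (fun p : ℝ × ℝ =>
        w x₀ t₀ + Λ * (h / 2 + ((p.1 - x₀) ^ 2 + 2 * R * (p.2 - t₀)) / (2 * h))
        + 2 * G * (√p.2 - √t₀) + ε * (1 + (p.1 - x₀) ^ 2 + (2 * R + 1) * (p.2 - t₀))) := by
        fun_prop
      refine (e1.sub e2.continuousOn).congr fun p _ => ?_
      simp only [hF, Pi.sub_apply]; ring
    obtain ⟨q, hqK, hq⟩ := hK.exists_isMaxOn ⟨_, hmem (x', t') h0' h1' hcon⟩ hFc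
    have hqpos : 0 < F q := lt_of_lt_of_le hcon (hq (hmem (x', t') h0' h1' hcon))
    have hqmax : ∀ p : ℝ × ℝ, t₀ ≤ p.2 → p.2 ≤ t₁ → F p ≤ F q := by
      intro p hp0 hp1
      rcases le_or_gt (F p) 0 with hp | hp
      · linarith
      · exact hq (hmem p hp0 hp1 hp)
    obtain ⟨x, t⟩ := q
    have hqt0 : t₀ ≤ t := hqK.2.1
    have hqt1 : t ≤ t₁ := hqK.2.2
    have htlt : t₀ < t := by
      rcases hqt0.lt_or_eq with h1 | h1
      · exact h1
      exfalso
      subst h1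
      have e1 := (abs_le.1 (hlip x x₀ t₀ ht₀ (by linarith))).2
      have e2 : Λ * |x - x₀| ≤ Λ * (h / 2 + (x - x₀) ^ 2 / (2 * h)) := by
        refine mul_le_mul_of_nonneg_left ?_ hΛ
        rw [← sq_abs (x - x₀), div_add_div _ _ (by norm_num) (by positivity),
          le_div_iff₀ (by positivity)]
        nlinarith [sq_nonneg (|x - x₀| - h)]
      simp only [hF, sub_self, mul_zero, add_zero] at hqpos
      nlinarith [sq_nonneg (x - x₀)]
    have htpos : 0 < t := by linarith
    have htT : t ≤ T := by linarith
    have d2 : wxx x t - Λ / h - 2 * ε ≤ 0 := by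
      refine second_deriv_nonpos_of_isLocalMax (f := fun y => F (y, t))
        (f' := fun y => wx y t - Λ * ((2 * (y - x₀)) / (2 * h)) - ε * (2 * (y - x₀))) (x := x)
        (Filter.Eventually.of_forall fun y => ?_) ?_ ?_
      · have e0 : HasDerivAt (fun y : ℝ => (y - x₀) ^ 2) (2 * (y - x₀)) y := by
          exact (((hasDerivAt_id y).sub_const x₀).pow 2).congr_deriv (by simp)
        have e1 := ((((hwx y t htpos htT).sub_const (w x₀ t₀)).sub
          ((((e0.add_const (2 * R * (t - t₀))).div_const (2 * h)).const_add (h / 2)).const_mul Λ)).sub_const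
          (2 * G * (√t - √t₀))).sub (((e0.const_add 1).add_const ((2 * R + 1) * (t - t₀))).const_mul ε)
        exact e1
      · have e0 : HasDerivAt (fun y : ℝ => 2 * (y - x₀)) 2 x := by
          simpa using ((hasDerivAt_id x).sub_const x₀).const_mul 2
        have e1 := ((hwxx x t htpos htT).sub ((e0.div_const (2 * h)).const_mul Λ)).sub
          (e0.const_mul ε)
        refine HasDerivAt.congr_deriv e1 ?_
        field_simp
      · exact Filter.Eventually.of_forall fun y => hqmax (y, t) hqt0 hqt1
    have d1 : 0 ≤ wt x t - Λ * (R / h) - G / √t - ε * (2 * R + 1) := by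
      refine deriv_nonneg_of_left_max (f := fun s => F (x, s)) htlt ?_
        (fun r hr0 hr1 => hqmax (x, r) hr0 (by linarith))
      have e0 : HasDerivAt (fun s : ℝ => s - t₀) 1 t := (hasDerivAt_id t).sub_const t₀
      have e1 := ((((hwt x t htpos htT).sub_const (w x₀ t₀)).sub
          (((((e0.const_mul (2 * R)).const_add ((x - x₀) ^ 2)).div_const (2 * h)).const_add (h / 2)).const_mul Λ)).sub
          (((Real.hasDerivAt_sqrt htpos.ne').sub_const (√t₀)).const_mul (2 * G))).sub
          (((e0.const_mul (2 * R + 1)).const_add (1 + (x - x₀) ^ 2)).const_mul ε)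
      refine HasDerivAt.congr_deriv e1 ?_
      have : 0 < √t := Real.sqrt_pos.2 htpos
      field_simp
    have e1 := heq x t htpos htT
    have e2 := (abs_le.1 (hg x t htpos htT)).2
    have e3 : a x t * wxx x t ≤ a x t * (Λ / h + 2 * ε) :=
      mul_le_mul_of_nonneg_left (by linarith) (ha0 x t htpos.le htT)
    have e4 : a x t * (Λ / h + 2 * ε) ≤ R * (Λ / h + 2 * ε) :=
      mul_le_mul_of_nonneg_right (haR x t htpos.le htT) (by positivity)
    have e5 : Λ * (R / h) = R * (Λ / h) := by ring
    nlinarith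
  have hlim : w x₀ t₁ - w x₀ t₀ ≤ Λ * (h / 2 + (2 * R * (t₁ - t₀)) / (2 * h))
      + 2 * G * (√t₁ - √t₀) := by
    set c := 1 + (2 * R + 1) * (t₁ - t₀) with hc
    have hcpos : 0 < c := by
      have : 0 < t₁ - t₀ := by linarith
      positivity
    refine le_of_forall_pos_le_add fun ε hε => ?_
    have := key (ε / c) (by positivity) x₀ t₁ h01.le le_rfl
    simp only [sub_self, ne_eq, OfNat.ofNat_ne_zero, not_false_eq_true, zero_pow, zero_add,
      add_zero] at this
    rw [← hc, div_mul_cancel₀ _ hcpos.ne'] at this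
    linarith
  have e1 : h / 2 + (2 * R * (t₁ - t₀)) / (2 * h) = (1 / 2 + R) * h := by
    rw [← hsq]; field_simp
  have e2 : √t₁ - √t₀ ≤ h := by
    have : √t₁ ≤ h + √t₀ := by
      have h1 := Real.sqrt_nonneg t₀
      have h2 := Real.sq_sqrt ht₀
      exact Real.sqrt_le_iff.2 ⟨by linarith, by nlinarith⟩
    linarith
  rw [e1] at hlim
  have e3 : 2 * G * (√t₁ - √t₀) ≤ 2 * G * h := mul_le_mul_of_nonneg_left e2 (by positivity)
  have e4 : 0 ≤ Λ * h := by positivity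
  nlinarith

/-! ### The Lipschitz estimate in space -/

/-- The profile `s r / (r + s)`, with `s = √t`, is a supersolution of `ψ_t - 2 λ ψ_rr = c / √t`
for `c = min (1/8) (λ/2)`; the derivatives of the profile are written out. -/
theorem profile_supersol {lam r s : ℝ} (hlam : 0 < lam) (hr : 0 < r) (hs : 0 < s) :
    min (1 / 8) (lam / 2) / s ≤
      r ^ 2 / (2 * s * (r + s) ^ 2) - 2 * lam * (-(2 * s ^ 2) / (r + s) ^ 3) := by
  have h1 : r ^ 2 / (2 * s * (r + s) ^ 2) - 2 * lam * (-(2 * s ^ 2) / (r + s) ^ 3)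
      = (r ^ 2 * (r + s) / 2 + 4 * lam * s ^ 3) / (s * (r + s) ^ 3) := by
    field_simp
    ring
  rw [h1, div_le_div_iff₀ hs (by positivity)]
  have hrs : 0 < r + s := by positivity
  have : min (1 / 8) (lam / 2) * (r + s) ^ 3 ≤ r ^ 2 * (r + s) / 2 + 4 * lam * s ^ 3 := by
    rcases le_total r s with h | h
    · have e1 : min (1 / 8) (lam / 2) * (r + s) ^ 3 ≤ (lam / 2) * (r + s) ^ 3 :=
        mul_le_mul_of_nonneg_right (min_le_right _ _) (by positivity)
      have e2 : (r + s) ^ 3 ≤ (2 * s) ^ 3 := pow_le_pow_left₀ hrs.le (by linarith) 3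
      have e3 : 0 ≤ r ^ 2 * (r + s) / 2 := by positivity
      nlinarith [mul_le_mul_of_nonneg_left e2 hlam.le]
    · have e1 : min (1 / 8) (lam / 2) * (r + s) ^ 3 ≤ (1 / 8) * (r + s) ^ 3 :=
        mul_le_mul_of_nonneg_right (min_le_left _ _) (by positivity)
      have e2 : (r + s) ^ 2 ≤ (2 * r) ^ 2 := pow_le_pow_left₀ hrs.le (by linarith) 2
      have e3 : 0 ≤ 4 * lam * s ^ 3 := by positivity
      nlinarith [mul_le_mul_of_nonneg_left e2 hrs.le]
  nlinarith [mul_le_mul_of_nonneg_left this hs.le]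

theorem penalty_dominates {R x y : ℝ} (hR : 0 ≤ R) :
    R * (4 + 2 * |x| + 2 * |y|) < (6 * R + 1) * (1 + x ^ 2 + y ^ 2) := by
  have h1 : 2 * |x| ≤ 1 + x ^ 2 := by nlinarith [sq_nonneg (|x| - 1), sq_abs x]
  have h2 : 2 * |y| ≤ 1 + y ^ 2 := by nlinarith [sq_nonneg (|y| - 1), sq_abs y]
  have h4 : R * (4 + 2 * |x| + 2 * |y|) ≤ R * (6 + x ^ 2 + y ^ 2) :=
    mul_le_mul_of_nonneg_left (by linarith) hR
  nlinarith [sq_nonneg x, sq_nonneg y, mul_nonneg hR (sq_nonneg x), mul_nonneg hR (sq_nonneg y)]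

/-- The contradiction at a contact point `(x, y, t)` in the doubling argument. Here `P`, `Q`, `V`
stand for the derivatives `ψ_r`, `ψ_rr`, `ψ_t` of the profile, `H` for the size of the penalization
`H (1 + x² + y²)`, and the last five hypotheses are the first and second order conditions. -/
theorem lip_contact {lam R L G c A M₀ E H s P Q V Ψ r x y ax ay bx bv gx gy ux uy uxx uyy utx uty : ℝ}
    (hR : 0 ≤ R) (hL : 0 ≤ L) (hApos : 0 ≤ A) (hAc : A * c = 2 * G) (hM₀ : 0 ≤ M₀)
    (hE1 : 1 ≤ E) (hHpos : 0 < H) (hP0 : 0 ≤ P) (hQ0 : Q ≤ 0)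
    (hsuper : c / s ≤ V - 2 * lam * Q) (hΨge : r * (E * (M₀ + A * P)) ≤ Ψ)
    (ax0 : lam ≤ ax) (ay0 : lam ≤ ay) (axR : ax ≤ R) (ayR : ay ≤ R) (hlam : 0 ≤ lam)
    (hbx : |bx| ≤ R) (hby : |bv| ≤ R) (hbL : |bx - bv| ≤ L * r)
    (e1 : utx = ax * uxx - bx * ux + gx) (e2 : uty = ay * uyy - bv * uy + gy)
    (hgx : |gx| ≤ G / s) (hgy : |gy| ≤ G / s)
    (fx : ux - E * (M₀ + A * P) - H * (2 * x) = 0)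
    (fy : -uy + E * (M₀ + A * P) - H * (2 * y) = 0)
    (hxx : uxx - E * (A * Q) - H * 2 ≤ 0) (hyy : -uyy - E * (A * Q) - H * 2 ≤ 0)
    (et : 0 ≤ utx - uty - (L * Ψ + E * (A * V)) - H * (6 * R + 1) * (1 + x ^ 2 + y ^ 2)) :
    False := by
  have g1 := (abs_le.1 hgx).2
  have g2 := (abs_le.1 hgy).1
  have hAQ : A * Q ≤ 0 := mul_nonpos_of_nonneg_of_nonpos hApos hQ0
  have hEAQ : E * (A * Q) ≤ 0 := mul_nonpos_of_nonneg_of_nonpos (by linarith) hAQ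
  have t1 : ax * uxx ≤ lam * (E * (A * Q)) + R * (H * 2) := by
    have h1 : ax * uxx ≤ ax * (E * (A * Q) + H * 2) :=
      mul_le_mul_of_nonneg_left (by linarith) (by linarith)
    have h2 : ax * (E * (A * Q)) ≤ lam * (E * (A * Q)) := mul_le_mul_of_nonpos_right ax0 hEAQ
    have h3 : ax * (H * 2) ≤ R * (H * 2) := mul_le_mul_of_nonneg_right axR (by positivity)
    linarith
  have t2 : -(ay * uyy) ≤ lam * (E * (A * Q)) + R * (H * 2) := by
    have h1 : ay * (-uyy) ≤ ay * (E * (A * Q) + H * 2) :=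
      mul_le_mul_of_nonneg_left (by linarith) (by linarith)
    have h2 : ay * (E * (A * Q)) ≤ lam * (E * (A * Q)) := mul_le_mul_of_nonpos_right ay0 hEAQ
    have h3 : ay * (H * 2) ≤ R * (H * 2) := mul_le_mul_of_nonneg_right ayR (by positivity)
    linarith
  have hZ : 0 ≤ E * (M₀ + A * P) := by positivity
  have t3 : -(bx * ux) + bv * uy ≤ L * Ψ + H * 2 * (R * |x|) + H * 2 * (R * |y|) := by
    have h1 : ux = E * (M₀ + A * P) + H * (2 * x) := by linarith
    have h2 : uy = E * (M₀ + A * P) - H * (2 * y) := by linarith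
    have h3 : -(bx - bv) * (E * (M₀ + A * P)) ≤ (L * r) * (E * (M₀ + A * P)) :=
      mul_le_mul_of_nonneg_right (by linarith [(abs_le.1 hbL).1]) hZ
    have h4 : L * (r * (E * (M₀ + A * P))) ≤ L * Ψ := mul_le_mul_of_nonneg_left hΨge hL
    have h5 : -bx * x ≤ R * |x| := by
      refine (le_abs_self _).trans ?_
      rw [abs_mul, abs_neg]
      exact mul_le_mul_of_nonneg_right hbx (abs_nonneg _)
    have h6 : -bv * y ≤ R * |y| := by
      refine (le_abs_self _).trans ?_
      rw [abs_mul, abs_neg]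
      exact mul_le_mul_of_nonneg_right hby (abs_nonneg _)
    have h7 := mul_le_mul_of_nonneg_left h5 (by positivity : 0 ≤ H * 2)
    have h8 := mul_le_mul_of_nonneg_left h6 (by positivity : 0 ≤ H * 2)
    have h9 : -(bx * ux) + bv * uy = -(bx - bv) * (E * (M₀ + A * P))
        + H * 2 * (-bx * x) + H * 2 * (-bv * y) := by rw [h1, h2]; ring
    rw [h9]
    linarith
  have t4 : 2 * (G / s) ≤ E * (A * V) - 2 * (lam * (E * (A * Q))) := by
    have h1 : A * (c / s) ≤ A * (V - 2 * lam * Q) := mul_le_mul_of_nonneg_left hsuper hApos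
    have h2 : A * (c / s) = 2 * (G / s) := by rw [← mul_div_assoc, hAc]; ring
    have h3 : 0 ≤ G / s := (abs_nonneg _).trans hgx
    have h4 : 1 * (A * (V - 2 * lam * Q)) ≤ E * (A * (V - 2 * lam * Q)) :=
      mul_le_mul_of_nonneg_right hE1 (by linarith)
    have h5 : E * (A * (V - 2 * lam * Q)) = E * (A * V) - 2 * (lam * (E * (A * Q))) := by ring
    linarith
  have t5 : R * (H * 2) + R * (H * 2) + H * 2 * (R * |x|) + H * 2 * (R * |y|)
      < H * (6 * R + 1) * (1 + x ^ 2 + y ^ 2) := by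
    have h3 := penalty_dominates (x := x) (y := y) hR
    have := mul_lt_mul_of_pos_left h3 hHpos
    linarith
  linarith

set_option maxHeartbeats 1000000 in
/-- Spatial Lipschitz estimate by doubling the variable: `w(x,t) - w(y,t)` is compared on `y < x`
with `e^{Lt} (M₀ r + A r √t / (r + √t))`, `r = x - y`. The barrier is concave in `r`, so only the
lower bound of `a` matters, and the source may blow up like `t^{-1/2}` at the initial time. -/
theorem lip_upper {T lam R L G M₀ Cw : ℝ} (hlam : 0 < lam) (hR : 0 ≤ R) (hL : 0 ≤ L)
    (hG : 0 ≤ G) (hM₀ : 0 ≤ M₀)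
    {w wxx wx wt a b g : ℝ → ℝ → ℝ}
    (hwx : ∀ x t, 0 < t → t ≤ T → HasDerivAt (fun y => w y t) (wx x t) x)
    (hwxx : ∀ x t, 0 < t → t ≤ T → HasDerivAt (fun y => wx y t) (wxx x t) x)
    (hwt : ∀ x t, 0 < t → t ≤ T → HasDerivAt (fun s => w x s) (wt x t) t)
    (hcont : ContinuousOn (fun p : ℝ × ℝ => w p.1 p.2) {p | 0 ≤ p.2 ∧ p.2 ≤ T})
    (hbd : ∀ x t, 0 ≤ t → t ≤ T → |w x t| ≤ Cw)
    (ha0 : ∀ x t, 0 ≤ t → t ≤ T → lam ≤ a x t) (haR : ∀ x t, 0 ≤ t → t ≤ T → a x t ≤ R)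
    (hbR : ∀ x t, 0 ≤ t → t ≤ T → |b x t| ≤ R)
    (hbL : ∀ x y t, 0 ≤ t → t ≤ T → |b x t - b y t| ≤ L * |x - y|)
    (heq : ∀ x t, 0 < t → t ≤ T → wt x t = a x t * wxx x t - b x t * wx x t + g x t)
    (hg : ∀ x t, 0 < t → t ≤ T → |g x t| ≤ G / √t)
    (hstart : ∀ x y, |w x 0 - w y 0| ≤ M₀ * |x - y|)
    {x₀ y₀ t₀ : ℝ} (hxy : y₀ ≤ x₀) (ht₀ : 0 ≤ t₀) (ht₀T : t₀ ≤ T) :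
    w x₀ t₀ - w y₀ t₀ ≤
      Real.exp (L * T) * (M₀ + 2 * G / min (1 / 8) (lam / 2)) * (x₀ - y₀) := by
  set c : ℝ := min (1 / 8) (lam / 2) with hc
  have hcpos : 0 < c := lt_min (by norm_num) (by positivity)
  set A : ℝ := 2 * G / c with hA
  have hApos : 0 ≤ A := by positivity
  have hAc : A * c = 2 * G := by rw [hA]; field_simp
  set κ : ℝ := 6 * R + 1 with hκ
  set Ψ : ℝ → ℝ → ℝ := fun r t =>
    Real.exp (L * t) * (M₀ * r + A * (√t * r / (r + √t))) with hΨ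
  have hΨ0 : ∀ r t, 0 ≤ r → 0 ≤ Ψ r t := by
    intro r t hr
    have := Real.sqrt_nonneg t
    simp only [hΨ]
    positivity
  have key : ∀ ε : ℝ, 0 < ε → ∀ x y t, y ≤ x → 0 ≤ t → t ≤ T →
      w x t - w y t - Ψ (x - y) t - ε * Real.exp (κ * t) * (1 + x ^ 2 + y ^ 2) ≤ 0 := by
    intro ε hε x' y' t' hxy' ht0' htT'
    by_contra hcon
    push Not at hcon
    set F : ℝ × ℝ × ℝ → ℝ := fun p =>
      w p.1 p.2.2 - w p.2.1 p.2.2 - Ψ (p.1 - p.2.1) p.2.2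
        - ε * Real.exp (κ * p.2.2) * (1 + p.1 ^ 2 + p.2.1 ^ 2) with hF
    set ρ : ℝ := √(2 * Cw / ε) with hρ
    set K : Set (ℝ × ℝ × ℝ) := (Icc (-ρ) ρ ×ˢ (Icc (-ρ) ρ ×ˢ Icc 0 T)) ∩ {p | p.2.1 ≤ p.1} with hKdef
    have hK : IsCompact K :=
      (isCompact_Icc.prod (isCompact_Icc.prod isCompact_Icc)).inter_right
        (isClosed_le (by fun_prop) (by fun_prop))
    have hmem : ∀ p : ℝ × ℝ × ℝ, p.2.1 ≤ p.1 → 0 ≤ p.2.2 → p.2.2 ≤ T → 0 < F p → p ∈ K := by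
      intro p hp hp0 hp1 hpF
      have e1 := abs_le.1 (hbd p.1 p.2.2 hp0 hp1)
      have e2 := abs_le.1 (hbd p.2.1 p.2.2 hp0 hp1)
      have e3 := hΨ0 (p.1 - p.2.1) p.2.2 (by linarith)
      have e4 : 1 ≤ Real.exp (κ * p.2.2) := Real.one_le_exp (by positivity)
      have e5 : ε * (1 + p.1 ^ 2 + p.2.1 ^ 2) ≤
          ε * Real.exp (κ * p.2.2) * (1 + p.1 ^ 2 + p.2.1 ^ 2) := by
        refine mul_le_mul_of_nonneg_right ?_ (by positivity)
        nlinarith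
      simp only [hF] at hpF
      have e6 : p.1 ^ 2 ≤ 2 * Cw / ε := by
        rw [le_div_iff₀ hε]; nlinarith [sq_nonneg p.2.1]
      have e7 : p.2.1 ^ 2 ≤ 2 * Cw / ε := by
        rw [le_div_iff₀ hε]; nlinarith [sq_nonneg p.1]
      have e8 := abs_le.1 (Real.abs_le_sqrt e6)
      have e9 := abs_le.1 (Real.abs_le_sqrt e7)
      exact ⟨⟨⟨e8.1, e8.2⟩, ⟨e9.1, e9.2⟩, hp0, hp1⟩, hp⟩
    -- the profile is continuous up to `r = 0`, `t = 0`, where it is at most `√t`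
    have hprof : ContinuousOn (fun p : ℝ × ℝ × ℝ =>
        √p.2.2 * (p.1 - p.2.1) / ((p.1 - p.2.1) + √p.2.2)) K := by
      intro p hp
      by_cases hz : (p.1 - p.2.1) + √p.2.2 = 0
      · have hr : 0 ≤ p.1 - p.2.1 := by have := hp.2; simp only [mem_ofPred_eq] at this; linarith
        have hs := Real.sqrt_nonneg p.2.2
        have hs0 : √p.2.2 = 0 := by linarith
        have hlim : Tendsto (fun q : ℝ × ℝ × ℝ => √q.2.2) (𝓝[K] p) (𝓝 0) := by
          have : Continuous (fun q : ℝ × ℝ × ℝ => √q.2.2) := by fun_prop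
          have h2 := this.continuousWithinAt (s := K) (x := p)
          unfold ContinuousWithinAt at h2
          simpa only [hs0] using h2
        unfold ContinuousWithinAt
        simp only [hz, div_zero]
        refine tendsto_of_tendsto_of_tendsto_of_le_of_le' tendsto_const_nhds hlim ?_ ?_
        · filter_upwards [self_mem_nhdsWithin] with q hq
          have hq' : 0 ≤ q.1 - q.2.1 := by
            have := hq.2; simp only [mem_ofPred_eq] at this; linarith
          have := Real.sqrt_nonneg q.2.2
          positivity
        · filter_upwards [self_mem_nhdsWithin] with q hq
          have hq' : 0 ≤ q.1 - q.2.1 := by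
            have := hq.2; simp only [mem_ofPred_eq] at this; linarith
          have := Real.sqrt_nonneg q.2.2
          exact div_le_of_le_mul₀ (by positivity) this (by nlinarith)
      · have h1 : Continuous (fun q : ℝ × ℝ × ℝ => √q.2.2 * (q.1 - q.2.1)) := by fun_prop
        have h2 : Continuous (fun q : ℝ × ℝ × ℝ => (q.1 - q.2.1) + √q.2.2) := by fun_prop
        exact (h1.continuousAt.div h2.continuousAt hz).continuousWithinAt
    have hFc : ContinuousOn F K := by
      have e1 : ContinuousOn (fun p : ℝ × ℝ × ℝ => w p.1 p.2.2) K := by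
        refine hcont.comp (f := fun p : ℝ × ℝ × ℝ => (p.1, p.2.2)) (by fun_prop) ?_
        intro p hp
        exact ⟨hp.1.2.2.1, hp.1.2.2.2⟩
      have e2 : ContinuousOn (fun p : ℝ × ℝ × ℝ => w p.2.1 p.2.2) K := by
        refine hcont.comp (f := fun p : ℝ × ℝ × ℝ => (p.2.1, p.2.2)) (by fun_prop) ?_
        intro p hp
        exact ⟨hp.1.2.2.1, hp.1.2.2.2⟩
      have e3 : ContinuousOn (fun p : ℝ × ℝ × ℝ => Ψ (p.1 - p.2.1) p.2.2) K := by
        simp only [hΨ]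
        fun_prop
      have e4 : Continuous (fun p : ℝ × ℝ × ℝ =>
          ε * Real.exp (κ * p.2.2) * (1 + p.1 ^ 2 + p.2.1 ^ 2)) := by fun_prop
      exact ((e1.sub e2).sub e3).sub e4.continuousOn
    obtain ⟨q, hqK, hq⟩ := hK.exists_isMaxOn ⟨_, hmem (x', y', t') hxy' ht0' htT' hcon⟩ hFc
    have hqpos : 0 < F q := lt_of_lt_of_le hcon (hq (hmem (x', y', t') hxy' ht0' htT' hcon))
    have hqmax : ∀ p : ℝ × ℝ × ℝ, p.2.1 ≤ p.1 → 0 ≤ p.2.2 → p.2.2 ≤ T → F p ≤ F q := by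
      intro p hp hp0 hp1
      rcases le_or_gt (F p) 0 with h | h
      · linarith
      · exact hq (hmem p hp hp0 hp1 h)
    obtain ⟨x, y, t⟩ := q
    have hyx : y ≤ x := hqK.2
    have htT : t ≤ T := hqK.1.2.2.2
    have ht0 : 0 ≤ t := hqK.1.2.2.1
    have hpen : 0 < ε * Real.exp (κ * t) * (1 + x ^ 2 + y ^ 2) := by positivity
    have hyx' : y < x := by
      rcases hyx.lt_or_eq with h | h
      · exact h
      · exfalso
        have := hΨ0 (x - y) t (by linarith)
        simp only [hF] at hqpos
        rw [h] at hqpos this hpen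
        linarith
    have htpos : 0 < t := by
      rcases ht0.lt_or_eq with h | h
      · exact h
      · exfalso
        subst h
        have e1 := (abs_le.1 (hstart x y)).2
        rw [abs_of_pos (by linarith : 0 < x - y)] at e1
        simp only [hF, hΨ, mul_zero, Real.exp_zero, Real.sqrt_zero, zero_mul, zero_div, one_mul,
          add_zero] at hqpos hpen
        linarith
    set r : ℝ := x - y with hr
    have hrpos : 0 < r := by linarith
    set s : ℝ := √t with hs
    have hspos : 0 < s := Real.sqrt_pos.2 htpos
    have hss : s ^ 2 = t := Real.sq_sqrt ht0
    set E : ℝ := Real.exp (L * t) with hE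
    have hE1 : 1 ≤ E := Real.one_le_exp (by positivity)
    set H : ℝ := ε * Real.exp (κ * t) with hH
    have hHpos : 0 < H := by positivity
    -- derivatives of the barrier in `r` and `t`
    have hΨr : ∀ r', 0 < r' → HasDerivAt (fun r => Ψ r t)
        (E * (M₀ + A * (s ^ 2 / (r' + s) ^ 2))) r' := by
      intro r' hr'
      have hne : r' + s ≠ 0 := by positivity
      have e1 : HasDerivAt (fun r : ℝ => s * r / (r + s)) (s ^ 2 / (r' + s) ^ 2) r' := by
        have := ((hasDerivAt_id r').const_mul s).div ((hasDerivAt_id r').add_const s) hne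
        refine HasDerivAt.congr_deriv this ?_
        simp only [id]
        field_simp
        ring
      have e2 := (((hasDerivAt_id r').const_mul M₀).add (e1.const_mul A)).const_mul E
      exact HasDerivAt.congr_deriv e2 (by simp)
    have hΨrr : HasDerivAt (fun r' => E * (M₀ + A * (s ^ 2 / (r' + s) ^ 2)))
        (E * (A * (-(2 * s ^ 2) / (r + s) ^ 3))) r := by
      have hne : r + s ≠ 0 := by positivity
      have e1 : HasDerivAt (fun r : ℝ => s ^ 2 / (r + s) ^ 2) (-(2 * s ^ 2) / (r + s) ^ 3) r := by
        have := (hasDerivAt_const r (s ^ 2)).div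
          (((hasDerivAt_id r).add_const s).pow 2) (pow_ne_zero 2 hne)
        refine HasDerivAt.congr_deriv this ?_
        simp only [id]
        field_simp
        simp
        ring
      exact ((e1.const_mul A).const_add M₀).const_mul E
    have hΨt : HasDerivAt (fun t => Ψ r t)
        (L * Ψ r t + E * (A * (r ^ 2 / (2 * s * (r + s) ^ 2)))) t := by
      have hne : r + s ≠ 0 := by positivity
      have e0 : HasDerivAt (fun t => √t) (1 / (2 * s)) t := Real.hasDerivAt_sqrt htpos.ne'
      have e1 : HasDerivAt (fun t : ℝ => √t * r / (r + √t)) (r ^ 2 / (2 * s * (r + s) ^ 2)) t := by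
        have := (e0.mul_const r).div (e0.const_add r) hne
        refine HasDerivAt.congr_deriv this ?_
        rw [← hs]
        field_simp
        ring
      have e2 : HasDerivAt (fun t => Real.exp (L * t)) (E * L) t := by
        exact (((hasDerivAt_id t).const_mul L).exp).congr_deriv (by simp [hE])
      have e3 := e2.mul ((e1.const_mul A).const_add (M₀ * r))
      refine HasDerivAt.congr_deriv e3 ?_
      simp only [hΨ]
      rw [← hs, ← hE]
      ring
    have ex1 : HasDerivAt (fun x => F (x, y, t))
        (wx x t - E * (M₀ + A * (s ^ 2 / (r + s) ^ 2)) - H * (2 * x)) x ∧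
        wxx x t - E * (A * (-(2 * s ^ 2) / (r + s) ^ 3)) - H * 2 ≤ 0 := by
      have e1 : ∀ z, y < z → HasDerivAt (fun x => F (x, y, t))
        (wx z t - E * (M₀ + A * (s ^ 2 / ((z - y) + s) ^ 2)) - H * (2 * z)) z := by
        intro z hz
        have e2 : HasDerivAt (fun x => Ψ (x - y) t)
            (E * (M₀ + A * (s ^ 2 / ((z - y) + s) ^ 2))) z := by
          have := (hΨr (z - y) (by linarith)).comp z ((hasDerivAt_id z).sub_const y)
          exact HasDerivAt.congr_deriv this (by simp)
        have e3 : HasDerivAt (fun x : ℝ => H * (1 + x ^ 2 + y ^ 2)) (H * (2 * z)) z := by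
          have := ((((hasDerivAt_id z).pow 2).const_add 1).add_const (y ^ 2)).const_mul H
          exact HasDerivAt.congr_deriv this (by simp)
        exact (((hwx z t htpos htT).sub_const (w y t)).sub e2).sub e3
      refine ⟨e1 x hyx', ?_⟩
      refine second_deriv_nonpos_of_isLocalMax (f := fun x => F (x, y, t)) (x := x)
        (f' := fun z => wx z t - E * (M₀ + A * (s ^ 2 / ((z - y) + s) ^ 2)) - H * (2 * z))
        ((eventually_gt_nhds hyx').mono fun z hz => e1 z hz) ?_
        ((eventually_gt_nhds hyx').mono fun z hz => hqmax (z, y, t) hz.le ht0 htT)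
      have e2 : HasDerivAt (fun z => E * (M₀ + A * (s ^ 2 / ((z - y) + s) ^ 2)))
          (E * (A * (-(2 * s ^ 2) / (r + s) ^ 3))) x := by
        have := HasDerivAt.comp x (h := fun z => z - y) hΨrr ((hasDerivAt_id x).sub_const y)
        exact HasDerivAt.congr_deriv this (by simp)
      have e3 : HasDerivAt (fun z : ℝ => H * (2 * z)) (H * 2) x := by
        exact (((hasDerivAt_id x).const_mul 2).const_mul H).congr_deriv (by simp)
      exact ((hwxx x t htpos htT).sub e2).sub e3
    have ey1 : HasDerivAt (fun y => F (x, y, t))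
        (-wx y t + E * (M₀ + A * (s ^ 2 / (r + s) ^ 2)) - H * (2 * y)) y ∧
        -wxx y t - E * (A * (-(2 * s ^ 2) / (r + s) ^ 3)) - H * 2 ≤ 0 := by
      have e1 : ∀ z, z < x → HasDerivAt (fun y => F (x, y, t))
        (-wx z t + E * (M₀ + A * (s ^ 2 / ((x - z) + s) ^ 2)) - H * (2 * z)) z := by
        intro z hz
        have e2 : HasDerivAt (fun y => Ψ (x - y) t)
            (-(E * (M₀ + A * (s ^ 2 / ((x - z) + s) ^ 2)))) z := by
          have := (hΨr (x - z) (by linarith)).comp z ((hasDerivAt_id z).const_sub x)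
          exact HasDerivAt.congr_deriv this (by simp)
        have e3 : HasDerivAt (fun y : ℝ => H * (1 + x ^ 2 + y ^ 2)) (H * (2 * z)) z := by
          have := (((hasDerivAt_id z).pow 2).const_add (1 + x ^ 2)).const_mul H
          exact HasDerivAt.congr_deriv this (by simp)
        have e4 := (((hwx z t htpos htT).const_sub (w x t)).sub e2).sub e3
        refine HasDerivAt.congr_deriv e4 ?_
        ring
      refine ⟨e1 y hyx', ?_⟩
      refine second_deriv_nonpos_of_isLocalMax (f := fun y => F (x, y, t)) (x := y)
        (f' := fun z => -wx z t + E * (M₀ + A * (s ^ 2 / ((x - z) + s) ^ 2)) - H * (2 * z))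
        ((eventually_lt_nhds hyx').mono fun z hz => e1 z hz) ?_
        ((eventually_lt_nhds hyx').mono fun z hz => hqmax (x, z, t) hz.le ht0 htT)
      have e2 : HasDerivAt (fun z => E * (M₀ + A * (s ^ 2 / ((x - z) + s) ^ 2)))
          (-(E * (A * (-(2 * s ^ 2) / (r + s) ^ 3)))) y := by
        have := HasDerivAt.comp y (h := fun z => x - z) hΨrr ((hasDerivAt_id y).const_sub x)
        exact HasDerivAt.congr_deriv this (by simp)
      have e3 : HasDerivAt (fun z : ℝ => H * (2 * z)) (H * 2) y := by
        exact (((hasDerivAt_id y).const_mul 2).const_mul H).congr_deriv (by simp)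
      have e4 := ((hwxx y t htpos htT).neg.add e2).sub e3
      exact HasDerivAt.congr_deriv e4 (by ring)
    have et : 0 ≤ wt x t - wt y t - (L * Ψ r t + E * (A * (r ^ 2 / (2 * s * (r + s) ^ 2))))
        - H * κ * (1 + x ^ 2 + y ^ 2) := by
      refine deriv_nonneg_of_left_max (f := fun s => F (x, y, s)) htpos ?_
        (fun τ h0 h1 => hqmax (x, y, τ) hyx h0 (by linarith))
      have e2 : HasDerivAt (fun t => ε * Real.exp (κ * t) * (1 + x ^ 2 + y ^ 2))
          (H * κ * (1 + x ^ 2 + y ^ 2)) t := by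
        have := ((((hasDerivAt_id t).const_mul κ).exp).const_mul ε).mul_const (1 + x ^ 2 + y ^ 2)
        refine HasDerivAt.congr_deriv this ?_
        simp only [hH, id]
        ring
      exact (((hwt x t htpos htT).sub (hwt y t htpos htT)).sub hΨt).sub e2
    have gx : wx x t - E * (M₀ + A * (s ^ 2 / (r + s) ^ 2)) - H * (2 * x) = 0 := by
      have hm : IsLocalMax (fun x => F (x, y, t)) x :=
        (eventually_gt_nhds hyx').mono fun z hz => hqmax (z, y, t) hz.le ht0 htT
      exact hm.hasDerivAt_eq_zero ex1.1
    have gy : -wx y t + E * (M₀ + A * (s ^ 2 / (r + s) ^ 2)) - H * (2 * y) = 0 := by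
      have hm : IsLocalMax (fun y => F (x, y, t)) y :=
        (eventually_lt_nhds hyx').mono fun z hz => hqmax (x, z, t) hz.le ht0 htT
      exact hm.hasDerivAt_eq_zero ey1.1
    have hsuper := profile_supersol hlam hrpos hspos
    rw [← hc] at hsuper
    set P : ℝ := s ^ 2 / (r + s) ^ 2 with hP
    set Q : ℝ := -(2 * s ^ 2) / (r + s) ^ 3 with hQ
    set V : ℝ := r ^ 2 / (2 * s * (r + s) ^ 2) with hV
    have hP0 : 0 ≤ P := by positivity
    have hQ0 : Q ≤ 0 := by
      rw [hQ, neg_div]; exact neg_nonpos.2 (by positivity)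
    have hPle : r * P ≤ s * r / (r + s) := by
      rw [hP, mul_div_assoc', div_le_div_iff₀ (by positivity) (by positivity)]
      have h1 : 0 ≤ r ^ 2 * s * (r + s) := by positivity
      linarith [(by ring : s * r * (r + s) ^ 2 = r * s ^ 2 * (r + s) + r ^ 2 * s * (r + s))]
    have hΨge : r * (E * (M₀ + A * P)) ≤ Ψ r t := by
      simp only [hΨ]
      rw [← hs, ← hE]
      have h1 := mul_le_mul_of_nonneg_left hPle hApos
      have h2 : r * (E * (M₀ + A * P)) = E * (M₀ * r + A * (r * P)) := by ring
      rw [h2]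
      exact mul_le_mul_of_nonneg_left (by linarith) (by linarith)
    exact lip_contact hR hL hApos hAc hM₀ hE1 hHpos hP0 hQ0 hsuper hΨge
      (ha0 x t ht0 htT) (ha0 y t ht0 htT) (haR x t ht0 htT) (haR y t ht0 htT)
      (hlam.le) (hbR x t ht0 htT) (hbR y t ht0 htT)
      ((hbL x y t ht0 htT).trans_eq (by rw [abs_of_pos hrpos]))
      (heq x t htpos htT) (heq y t htpos htT) (hg x t htpos htT) (hg y t htpos htT)
      gx gy ex1.2 ey1.2 et
  have hlim : w x₀ t₀ - w y₀ t₀ ≤ Ψ (x₀ - y₀) t₀ := by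
    set d := Real.exp (κ * t₀) * (1 + x₀ ^ 2 + y₀ ^ 2) with hd
    have hdpos : 0 < d := by positivity
    refine le_of_forall_pos_le_add fun ε hε => ?_
    have := key (ε / d) (by positivity) x₀ y₀ t₀ hxy ht₀ ht₀T
    rw [mul_assoc, ← hd, div_mul_cancel₀ _ hdpos.ne'] at this
    linarith
  refine hlim.trans ?_
  have hr : 0 ≤ x₀ - y₀ := by linarith
  have hs := Real.sqrt_nonneg t₀
  have h1 : √t₀ * (x₀ - y₀) / ((x₀ - y₀) + √t₀) ≤ x₀ - y₀ :=
    div_le_of_le_mul₀ (by positivity) hr (by nlinarith)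
  have h2 : M₀ * (x₀ - y₀) + A * (√t₀ * (x₀ - y₀) / ((x₀ - y₀) + √t₀)) ≤
      (M₀ + A) * (x₀ - y₀) := by
    have := mul_le_mul_of_nonneg_left h1 hApos
    linarith
  have h3 : Real.exp (L * t₀) ≤ Real.exp (L * T) :=
    Real.exp_le_exp.2 (mul_le_mul_of_nonneg_left ht₀T hL)
  rw [mul_assoc]
  exact mul_le_mul h3 h2 (by positivity) (Real.exp_pos _).le

/-! ### The second derivative bound -/

/-- The mixed second difference `¼ (g(x+y+z) - g(x+y-z) - g(x-y+z) + g(x-y-z))`, which is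
`y z g''(x)` to leading order. -/
noncomputable def mixedDiff (g : ℝ → ℝ) (x y z : ℝ) : ℝ :=
  (g (x + y + z) - g (x + y - z) - g (x - y + z) + g (x - y - z)) / 4

theorem hasDerivAt_mixedDiff_right {g g' : ℝ → ℝ} (hg : ∀ x, HasDerivAt g (g' x) x) (x y z : ℝ) :
    HasDerivAt (fun z => mixedDiff g x y z)
      ((g' (x + y + z) + g' (x + y - z) - g' (x - y + z) - g' (x - y - z)) / 4) z := by
  have h1 : ∀ c : ℝ, HasDerivAt (fun z => g (c + z)) (g' (c + z)) z := fun c =>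
    HasDerivAt.congr_deriv ((hg (c + z)).comp z ((hasDerivAt_id z).const_add c)) (by simp)
  have h2 : ∀ c : ℝ, HasDerivAt (fun z => g (c - z)) (-g' (c - z)) z := fun c =>
    HasDerivAt.congr_deriv ((hg (c - z)).comp z ((hasDerivAt_id z).const_sub c)) (by simp)
  exact HasDerivAt.congr_deriv
    (((((h1 (x + y)).sub (h2 (x + y))).sub (h1 (x - y))).add (h2 (x - y))).div_const 4) (by ring)

theorem hasDerivAt_mixedDiff_right' {g g' : ℝ → ℝ} (hg : ∀ x, HasDerivAt g (g' x) x) (x y z : ℝ) :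
    HasDerivAt (fun z => (g (x + y + z) + g (x + y - z) - g (x - y + z) - g (x - y - z)) / 4)
      (mixedDiff g' x y z) z := by
  have h1 : ∀ c : ℝ, HasDerivAt (fun z => g (c + z)) (g' (c + z)) z := fun c =>
    HasDerivAt.congr_deriv ((hg (c + z)).comp z ((hasDerivAt_id z).const_add c)) (by simp)
  have h2 : ∀ c : ℝ, HasDerivAt (fun z => g (c - z)) (-g' (c - z)) z := fun c =>
    HasDerivAt.congr_deriv ((hg (c - z)).comp z ((hasDerivAt_id z).const_sub c)) (by simp)
  exact HasDerivAt.congr_deriv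
    (((((h1 (x + y)).add (h2 (x + y))).sub (h1 (x - y))).sub (h2 (x - y))).div_const 4)
    (by unfold mixedDiff; ring)

theorem mixedDiff_comm (g : ℝ → ℝ) (x y z : ℝ) : mixedDiff g x y z = mixedDiff g x z y := by
  unfold mixedDiff
  rw [show x + z + y = x + y + z by ring, show x + z - y = x - y + z by ring,
    show x - z + y = x + y - z by ring, show x - z - y = x - y - z by ring]
  ring

/-- If `g` is `G`-Lipschitz on `[x - 2h, x + 2h]`, its mixed difference is at most `G z`. -/
theorem abs_mixedDiff_le {g : ℝ → ℝ} {G x y z h : ℝ} (hz : 0 ≤ z) (hy : 0 ≤ y) (hyh : y ≤ h)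
    (hzh : z ≤ h)
    (hg : ∀ p q, |p - x| ≤ 2 * h → |q - x| ≤ 2 * h → |g p - g q| ≤ G * |p - q|) :
    |mixedDiff g x y z| ≤ G * z := by
  have h1 := hg (x + y + z) (x + y - z) (by rw [abs_le]; constructor <;> linarith)
    (by rw [abs_le]; constructor <;> linarith)
  have h2 := hg (x - y + z) (x - y - z) (by rw [abs_le]; constructor <;> linarith)
    (by rw [abs_le]; constructor <;> linarith)
  rw [show x + y + z - (x + y - z) = 2 * z by ring, abs_of_nonneg (by linarith : 0 ≤ 2 * z),
    abs_le] at h1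
  rw [show x - y + z - (x - y - z) = 2 * z by ring, abs_of_nonneg (by linarith : 0 ≤ 2 * z),
    abs_le] at h2
  unfold mixedDiff
  rw [abs_le]
  constructor <;> linarith [h1.1, h1.2, h2.1, h2.2]

/-- A bound `M` on the second derivative gives the bound `M y z` on the mixed difference. -/
theorem mixedDiff_le_of_second_deriv {g g' g'' : ℝ → ℝ} {M x y z h : ℝ}
    (hg : ∀ x, HasDerivAt g (g' x) x) (hg' : ∀ x, HasDerivAt g' (g'' x) x)
    (hM : ∀ p, |p - x| ≤ 2 * h → |g'' p| ≤ M) (hy : 0 ≤ y) (hz : 0 ≤ z) (hyh : y ≤ h)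
    (hzh : z ≤ h) : mixedDiff g x y z ≤ M * (y * z) := by
  have hlip : ∀ p q, |p - x| ≤ 2 * h → |q - x| ≤ 2 * h → |g' p - g' q| ≤ M * |p - q| := by
    intro p q hp hq
    have := (convex_Icc (x - 2 * h) (x + 2 * h)).norm_image_sub_le_of_norm_hasDerivWithin_le
      (f := g') (f' := g'') (C := M) (x := q) (y := p)
      (fun r _ => (hg' r).hasDerivWithinAt)
      (fun r hr => hM r (by rw [abs_le]; constructor <;> linarith [hr.1, hr.2]))
      (by rw [abs_le] at hq; constructor <;> linarith [hq.1, hq.2])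
      (by rw [abs_le] at hp; constructor <;> linarith [hp.1, hp.2])
    simpa only [Real.norm_eq_abs] using this
  have h2 := (convex_Icc 0 z).norm_image_sub_le_of_norm_hasDerivWithin_le
      (f := fun z => mixedDiff g x y z) (C := M * y) (x := 0) (y := z)
      (fun r _ => (hasDerivAt_mixedDiff_right hg x y r).hasDerivWithinAt) ?_
      ⟨le_rfl, hz⟩ ⟨hz, le_rfl⟩
  · have h0 : mixedDiff g x y 0 = 0 := by unfold mixedDiff; simp
    simp only [h0, sub_zero, Real.norm_eq_abs, abs_of_nonneg hz] at h2
    linarith [le_abs_self (mixedDiff g x y z)]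
  · intro r hr
    have h3 := hlip (x + y + r) (x - y + r)
      (by rw [abs_le]; constructor <;> linarith [hr.1, hr.2])
      (by rw [abs_le]; constructor <;> linarith [hr.1, hr.2])
    have h4 := hlip (x + y - r) (x - y - r)
      (by rw [abs_le]; constructor <;> linarith [hr.1, hr.2])
      (by rw [abs_le]; constructor <;> linarith [hr.1, hr.2])
    rw [show x + y + r - (x - y + r) = 2 * y by ring, abs_of_nonneg (by linarith : 0 ≤ 2 * y),
      abs_le] at h3
    rw [show x + y - r - (x - y - r) = 2 * y by ring, abs_of_nonneg (by linarith : 0 ≤ 2 * y),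
      abs_le] at h4
    rw [Real.norm_eq_abs, abs_le]
    constructor <;> linarith [h3.1, h3.2, h4.1, h4.2]

/-- A bound for small mixed differences bounds the second derivative. -/
theorem second_deriv_le_of_mixedDiff {g g' : ℝ → ℝ} {d B x h : ℝ} (hh : 0 < h)
    (hg : ∀ x, HasDerivAt g (g' x) x) (hg' : HasDerivAt g' d x)
    (hB : ∀ y z, 0 ≤ y → y ≤ h → 0 ≤ z → z ≤ h → mixedDiff g x y z ≤ B * (y * z)) : d ≤ B := by
  have h1 : ∀ y, 0 < y → y < h → (g' (x + y) - g' (x - y)) / 2 ≤ B * y := by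
    intro y hy0 hyh
    refine deriv_le_of_le_mul (θ := fun z => mixedDiff g x y z) hh ?_ ?_ ?_
    · exact HasDerivAt.congr_deriv (hasDerivAt_mixedDiff_right hg x y 0) (by simp only [add_zero, sub_zero]; ring)
    · unfold mixedDiff; simp
    · intro z hz0 hzh
      linarith [hB y z hy0.le hyh.le hz0.le hzh.le]
  refine deriv_le_of_le_mul (θ := fun y => (g' (x + y) - g' (x - y)) / 2) hh ?_ (by simp) h1
  have e1 : HasDerivAt (fun y => g' (x + y)) d 0 :=
    HasDerivAt.congr_deriv (HasDerivAt.comp (0:ℝ) (h := fun y => x + y) (h₂ := g') (h₂' := d) (by simpa using hg')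
      ((hasDerivAt_id (0:ℝ)).const_add x)) (by simp)
  have e2 : HasDerivAt (fun y => g' (x - y)) (-d) 0 :=
    HasDerivAt.congr_deriv (HasDerivAt.comp (0:ℝ) (h := fun y => x - y) (h₂ := g') (h₂' := d) (by simpa using hg')
      ((hasDerivAt_id (0:ℝ)).const_sub x)) (by simp)
  exact HasDerivAt.congr_deriv ((e1.sub e2).div_const 2) (by ring)

/-- The error made in replacing `a` by its value at the centre of the four points. -/
theorem mixedDiff_mul_le {a g : ℝ → ℝ} {L M x y z h : ℝ} (hL : 0 ≤ L)
    (hy : 0 ≤ y) (hz : 0 ≤ z) (hyh : y ≤ h) (hzh : z ≤ h)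
    (ha : ∀ p, |a p - a x| ≤ L * |p - x|) (hM : ∀ p, |p - x| ≤ 2 * h → |g p| ≤ M) :
    mixedDiff (fun p => a p * g p) x y z ≤ a x * mixedDiff g x y z + L * M * (y + z) := by
  have key : ∀ p, |p - x| ≤ y + z → |(a p - a x) * g p| ≤ L * (y + z) * M := by
    intro p hp
    rw [abs_mul]
    have h1 : |a p - a x| ≤ L * (y + z) := (ha p).trans (mul_le_mul_of_nonneg_left hp hL)
    exact mul_le_mul h1 (hM p (by linarith)) (abs_nonneg _) (by positivity)
  have k1 := abs_le.1 (key (x + y + z) (by rw [abs_le]; constructor <;> linarith))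
  have k2 := abs_le.1 (key (x + y - z) (by rw [abs_le]; constructor <;> linarith))
  have k3 := abs_le.1 (key (x - y + z) (by rw [abs_le]; constructor <;> linarith))
  have k4 := abs_le.1 (key (x - y - z) (by rw [abs_le]; constructor <;> linarith))
  unfold mixedDiff
  linarith [k1.1, k1.2, k2.1, k2.2, k3.1, k3.2, k4.1, k4.2]

/-- Local bound for the second derivative. The mixed second difference of `u` around `x₀` is
compared on `[0,h]² × [t₀ - τ, t₀]` with
`y z (M (t₀ - t) / τ + κ (2h - y - z) + Λ / h)`. Since `M` is multiplied by small factors, the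
estimate can be absorbed when `h` is small compared with `√τ`. -/
theorem uxx_local {T lam L M G Λ h τ x₀ t₀ : ℝ} (hlam : 0 < lam) (hL : 0 ≤ L)
    (hG : 0 ≤ G) (hΛ : 0 ≤ Λ) (hh : 0 < h) (hτ : 0 < τ) (hτt : 0 < t₀ - τ) (ht₀ : t₀ ≤ T)
    {u ux uxx ut a g : ℝ → ℝ → ℝ}
    (hux : ∀ x t, 0 < t → t ≤ T → HasDerivAt (fun y => u y t) (ux x t) x)
    (huxx : ∀ x t, 0 < t → t ≤ T → HasDerivAt (fun y => ux y t) (uxx x t) x)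
    (hut : ∀ x t, 0 < t → t ≤ T → HasDerivAt (fun s => u x s) (ut x t) t)
    (hcont : ContinuousOn (fun p : ℝ × ℝ => u p.1 p.2) {p | 0 ≤ p.2 ∧ p.2 ≤ T})
    (ha0 : ∀ x t, 0 ≤ t → t ≤ T → lam ≤ a x t)
    (haL : ∀ x y t, 0 ≤ t → t ≤ T → |a x t - a y t| ≤ L * |x - y|)
    (heq : ∀ x t, 0 < t → t ≤ T → ut x t = a x t * uxx x t + g x t)
    (hlip : ∀ x y t, 0 ≤ t → t ≤ T → |u x t - u y t| ≤ Λ * |x - y|)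
    (hM : ∀ x t, |x - x₀| ≤ 2 * h → t₀ - τ ≤ t → t ≤ t₀ → |uxx x t| ≤ M)
    (hg : ∀ x y t, |x - x₀| ≤ 2 * h → |y - x₀| ≤ 2 * h → t₀ - τ ≤ t → t ≤ t₀ →
      |g x t - g y t| ≤ G * |x - y|) :
    uxx x₀ t₀ ≤ 2 * h * ((L * M + G + h * M / τ) / lam) + Λ / h := by
  have hM0 : 0 ≤ M := (abs_nonneg _).trans
    (hM x₀ t₀ (by simp [hh.le]) (by linarith) le_rfl)
  have key : ∀ κ, (L * M + G + h * M / τ) / lam < κ → ∀ y z t, 0 ≤ y → y ≤ h → 0 ≤ z → z ≤ h →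
      t₀ - τ ≤ t → t ≤ t₀ → mixedDiff (fun p => u p t) x₀ y z
        - y * z * (M * (t₀ - t) / τ + κ * (2 * h - y - z) + Λ / h) ≤ 0 := by
    intro κ hκ y' z' t' hy0' hyh' hz0' hzh' ht0' ht1'
    have hκ0 : 0 ≤ κ := le_trans (by positivity) hκ.le
    by_contra hcon
    push Not at hcon
    set F : ℝ × ℝ × ℝ → ℝ := fun p => mixedDiff (fun q => u q p.2.2) x₀ p.1 p.2.1
        - p.1 * p.2.1 * (M * (t₀ - p.2.2) / τ + κ * (2 * h - p.1 - p.2.1) + Λ / h) with hF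
    set K : Set (ℝ × ℝ × ℝ) := Icc 0 h ×ˢ (Icc 0 h ×ˢ Icc (t₀ - τ) t₀) with hKdef
    have hK : IsCompact K := isCompact_Icc.prod (isCompact_Icc.prod isCompact_Icc)
    have hp' : (y', z', t') ∈ K := ⟨⟨hy0', hyh'⟩, ⟨hz0', hzh'⟩, ht0', ht1'⟩
    have hFc : ContinuousOn F K := by
      have e1 : ∀ φ : ℝ × ℝ × ℝ → ℝ, Continuous φ →
          ContinuousOn (fun p : ℝ × ℝ × ℝ => u (φ p) p.2.2) K := by
        intro φ hφ
        refine hcont.comp (f := fun p : ℝ × ℝ × ℝ => (φ p, p.2.2)) (by fun_prop) ?_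
        intro p hp
        exact ⟨by linarith [hp.2.2.1], by linarith [hp.2.2.2]⟩
      have e2 : ContinuousOn (fun p : ℝ × ℝ × ℝ => mixedDiff (fun q => u q p.2.2) x₀ p.1 p.2.1) K := by
        unfold mixedDiff
        exact ((((e1 (fun p => x₀ + p.1 + p.2.1) (by fun_prop)).sub
          (e1 (fun p => x₀ + p.1 - p.2.1) (by fun_prop))).sub
          (e1 (fun p => x₀ - p.1 + p.2.1) (by fun_prop))).add
          (e1 (fun p => x₀ - p.1 - p.2.1) (by fun_prop))).div_const 4
      exact e2.sub (by fun_prop)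
    obtain ⟨q, hqK, hq⟩ := hK.exists_isMaxOn ⟨_, hp'⟩ hFc
    have hqpos : 0 < F q := lt_of_lt_of_le hcon (hq hp')
    obtain ⟨y, z, t⟩ := q
    have hy0 : 0 ≤ y := hqK.1.1
    have hyh : y ≤ h := hqK.1.2
    have hz0 : 0 ≤ z := hqK.2.1.1
    have hzh : z ≤ h := hqK.2.1.2
    have ht0 : t₀ - τ ≤ t := hqK.2.2.1
    have ht1 : t ≤ t₀ := hqK.2.2.2
    have htpos : 0 < t := by linarith
    have htT : t ≤ T := by linarith
    have hFq : F (y, z, t) = mixedDiff (fun q => u q t) x₀ y z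
        - y * z * (M * (t₀ - t) / τ + κ * (2 * h - y - z) + Λ / h) := rfl
    rw [hFq] at hqpos
    have hb1 : 0 ≤ M * (t₀ - t) / τ := by
      have : 0 ≤ t₀ - t := by linarith
      positivity
    have hb2 : 0 ≤ κ * (2 * h - y - z) := mul_nonneg hκ0 (by linarith)
    have hyz : 0 ≤ y * z := by positivity
    have hypos : 0 < y := by
      rcases hy0.lt_or_eq with h1 | h1
      · exact h1
      · exfalso
        subst h1
        unfold mixedDiff at hqpos
        simp at hqpos
    have hzpos : 0 < z := by
      rcases hz0.lt_or_eq with h1 | h1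
      · exact h1
      · exfalso
        subst h1
        unfold mixedDiff at hqpos
        simp at hqpos
    have hzlip : |mixedDiff (fun q => u q t) x₀ y z| ≤ Λ * z :=
      abs_mixedDiff_le hz0 hy0 hyh hzh (fun p q _ _ => hlip p q t htpos.le htT)
    have hylip : |mixedDiff (fun q => u q t) x₀ y z| ≤ Λ * y := by
      rw [mixedDiff_comm]
      exact abs_mixedDiff_le hy0 hz0 hzh hyh (fun p q _ _ => hlip p q t htpos.le htT)
    have hb3 : y * z * (Λ / h) ≤
        y * z * (M * (t₀ - t) / τ + κ * (2 * h - y - z) + Λ / h) :=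
      mul_le_mul_of_nonneg_left (by linarith) hyz
    have hyh' : y < h := by
      rcases hyh.lt_or_eq with h1 | h1
      · exact h1
      · exfalso
        have : y * z * (Λ / h) = Λ * z := by rw [h1]; field_simp
        linarith [le_abs_self (mixedDiff (fun q => u q t) x₀ y z)]
    have hzh' : z < h := by
      rcases hzh.lt_or_eq with h1 | h1
      · exact h1
      · exfalso
        have : y * z * (Λ / h) = Λ * y := by rw [h1]; field_simp
        linarith [le_abs_self (mixedDiff (fun q => u q t) x₀ y z)]
    have ht0' : t₀ - τ < t := by
      rcases ht0.lt_or_eq with h1 | h1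
      · exact h1
      · exfalso
        have h2 := mixedDiff_le_of_second_deriv (x := x₀) (fun x => hux x t htpos htT)
          (fun x => huxx x t htpos htT) (fun p hp => hM p t hp ht0 ht1) hy0 hz0 hyh hzh
        have h3 : M * (t₀ - t) / τ = M := by rw [← h1]; field_simp; ring
        have h4 : y * z * M ≤ y * z * (M * (t₀ - t) / τ + κ * (2 * h - y - z) + Λ / h) := by
          refine mul_le_mul_of_nonneg_left ?_ hyz
          have : 0 ≤ Λ / h := by positivity
          linarith
        linarith
    set S : ℝ := mixedDiff (fun q => uxx q t) x₀ y z with hS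
    -- second order conditions in `y` and `z`
    have dz : S + 2 * κ * y ≤ 0 := by
      refine second_deriv_nonpos_of_isLocalMax (f := fun z => F (y, z, t)) (x := z)
        (f' := fun z => (ux (x₀ + y + z) t + ux (x₀ + y - z) t - ux (x₀ - y + z) t
          - ux (x₀ - y - z) t) / 4 - (y * (M * (t₀ - t) / τ + κ * (2 * h - y - z) + Λ / h)
            + y * z * (-κ)))
        (Filter.Eventually.of_forall fun z => ?_) ?_ ?_
      · have e1 := hasDerivAt_mixedDiff_right (fun x => hux x t htpos htT) x₀ y z
        have e2 : HasDerivAt (fun z => M * (t₀ - t) / τ + κ * (2 * h - y - z) + Λ / h) (-κ) z :=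
          HasDerivAt.congr_deriv (((((hasDerivAt_id z).const_sub (2 * h - y)).const_mul κ).const_add
            (M * (t₀ - t) / τ)).add_const (Λ / h)) (by simp)
        have e3 : HasDerivAt (fun z => y * z) y z :=
          HasDerivAt.congr_deriv ((hasDerivAt_id z).const_mul y) (by simp)
        exact e1.sub (e3.mul e2)
      · have e1 := hasDerivAt_mixedDiff_right' (fun x => huxx x t htpos htT) x₀ y z
        have e2 : HasDerivAt (fun z => M * (t₀ - t) / τ + κ * (2 * h - y - z) + Λ / h) (-κ) z :=
          HasDerivAt.congr_deriv (((((hasDerivAt_id z).const_sub (2 * h - y)).const_mul κ).const_add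
            (M * (t₀ - t) / τ)).add_const (Λ / h)) (by simp)
        have e3 : HasDerivAt (fun z => y * z) y z :=
          HasDerivAt.congr_deriv ((hasDerivAt_id z).const_mul y) (by simp)
        exact HasDerivAt.congr_deriv (e1.sub ((e2.const_mul y).add (e3.mul_const (-κ)))) (by ring)
      · filter_upwards [Ioo_mem_nhds hzpos hzh'] with r hr
        exact hq (show (y, r, t) ∈ K from ⟨⟨hy0, hyh⟩, ⟨hr.1.le, hr.2.le⟩, ht0, ht1⟩)
    have dy : S + 2 * κ * z ≤ 0 := by
      refine second_deriv_nonpos_of_isLocalMax (f := fun y => F (y, z, t)) (x := y)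
        (f' := fun y => (ux (x₀ + z + y) t + ux (x₀ + z - y) t - ux (x₀ - z + y) t
          - ux (x₀ - z - y) t) / 4 - (z * (M * (t₀ - t) / τ + κ * (2 * h - y - z) + Λ / h)
            + y * z * (-κ)))
        (Filter.Eventually.of_forall fun y => ?_) ?_ ?_
      · have e1 := hasDerivAt_mixedDiff_right (fun x => hux x t htpos htT) x₀ z y
        have e2 : HasDerivAt (fun y => M * (t₀ - t) / τ + κ * (2 * h - y - z) + Λ / h) (-κ) y :=
          HasDerivAt.congr_deriv ((((((hasDerivAt_id y).const_sub (2 * h)).sub_const z).const_mul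
            κ).const_add (M * (t₀ - t) / τ)).add_const (Λ / h)) (by simp)
        have e3 : HasDerivAt (fun y => y * z) z y :=
          HasDerivAt.congr_deriv ((hasDerivAt_id y).mul_const z) (by simp)
        have e4 : (fun y => F (y, z, t)) = fun y => mixedDiff (fun q => u q t) x₀ z y
          - y * z * (M * (t₀ - t) / τ + κ * (2 * h - y - z) + Λ / h) := by
          funext y
          rw [mixedDiff_comm]
        rw [e4]
        exact e1.sub (e3.mul e2)
      · have e1 := hasDerivAt_mixedDiff_right' (fun x => huxx x t htpos htT) x₀ z y
        rw [mixedDiff_comm] at e1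
        have e2 : HasDerivAt (fun y => M * (t₀ - t) / τ + κ * (2 * h - y - z) + Λ / h) (-κ) y :=
          HasDerivAt.congr_deriv ((((((hasDerivAt_id y).const_sub (2 * h)).sub_const z).const_mul
            κ).const_add (M * (t₀ - t) / τ)).add_const (Λ / h)) (by simp)
        have e3 : HasDerivAt (fun y => y * z) z y :=
          HasDerivAt.congr_deriv ((hasDerivAt_id y).mul_const z) (by simp)
        exact HasDerivAt.congr_deriv (e1.sub ((e2.const_mul z).add (e3.mul_const (-κ)))) (by ring)
      · filter_upwards [Ioo_mem_nhds hypos hyh'] with r hr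
        exact hq (show (r, z, t) ∈ K from ⟨⟨hr.1.le, hr.2.le⟩, ⟨hz0, hzh⟩, ht0, ht1⟩)
    have dt : 0 ≤ mixedDiff (fun q => ut q t) x₀ y z + y * z * (M / τ) := by
      refine deriv_nonneg_of_left_max (f := fun t => F (y, z, t)) ht0' ?_
        (fun r h0 h1 => hq (show (y, z, r) ∈ K from
          ⟨⟨hy0, hyh⟩, ⟨hz0, hzh⟩, h0, h1.trans ht1⟩))
      have e1 := (((((hut (x₀ + y + z) t htpos htT).sub (hut (x₀ + y - z) t htpos htT)).sub
        (hut (x₀ - y + z) t htpos htT)).add (hut (x₀ - y - z) t htpos htT)).div_const 4)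
      have e2 := (((((((hasDerivAt_id t).const_sub t₀).const_mul M).div_const τ).add_const
        (κ * (2 * h - y - z))).add_const (Λ / h)).const_mul (y * z))
      exact HasDerivAt.congr_deriv (e1.sub e2) (by unfold mixedDiff; ring)
    have e1 : mixedDiff (fun q => ut q t) x₀ y z =
        mixedDiff (fun q => a q t * uxx q t) x₀ y z + mixedDiff (fun q => g q t) x₀ y z := by
      unfold mixedDiff
      simp only [heq _ t htpos htT]
      ring
    have e2 := mixedDiff_mul_le (a := fun q => a q t) (g := fun q => uxx q t) hL hy0 hz0 hyh hzh
      (fun p => haL p x₀ t htpos.le htT) (fun p hp => hM p t hp ht0 ht1)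
    have e3 := (abs_le.1 (abs_mixedDiff_le (g := fun q => g q t) hz0 hy0 hyh hzh
      (fun p q hp hq => hg p q t hp hq ht0 ht1))).2
    have e4 : a x₀ t * S ≤ a x₀ t * (-(κ * (y + z))) :=
      mul_le_mul_of_nonneg_left (by linarith) (by linarith [ha0 x₀ t htpos.le htT])
    have hκyz : 0 ≤ κ * (y + z) := by positivity
    have e5 : lam * (κ * (y + z)) ≤ a x₀ t * (κ * (y + z)) :=
      mul_le_mul_of_nonneg_right (ha0 x₀ t htpos.le htT) hκyz
    have e6 : (L * M + G + h * M / τ) * (y + z) < κ * lam * (y + z) :=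
      mul_lt_mul_of_pos_right ((div_lt_iff₀ hlam).1 hκ) (by linarith)
    have e7 : y * z * (M / τ) ≤ h * (y + z) * (M / τ) := by
      refine mul_le_mul_of_nonneg_right ?_ (by positivity)
      have := mul_le_mul_of_nonneg_right hyh hz0
      have := mul_nonneg hh.le hy0
      linarith
    have e8 : h * (y + z) * (M / τ) = h * M / τ * (y + z) := by ring
    have e9 : 0 ≤ G * y := by positivity
    beta_reduce at e2
    rw [← hS] at e2
    linarith
  have main : ∀ κ, (L * M + G + h * M / τ) / lam < κ → uxx x₀ t₀ ≤ κ * (2 * h) + Λ / h := by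
    intro κ hκ
    have hκ0 : 0 ≤ κ := le_trans (by positivity) hκ.le
    refine second_deriv_le_of_mixedDiff hh (fun x => hux x t₀ (by linarith) ht₀)
      (huxx x₀ t₀ (by linarith) ht₀) ?_
    intro y z hy0 hyh hz0 hzh
    have h1 := key κ hκ y z t₀ hy0 hyh hz0 hzh (by linarith) le_rfl
    have h2 : y * z * (M * (t₀ - t₀) / τ + κ * (2 * h - y - z) + Λ / h) ≤
        y * z * (κ * (2 * h) + Λ / h) := by
      refine mul_le_mul_of_nonneg_left ?_ (by positivity)
      have : 0 ≤ κ * (y + z) := by positivity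
      simp only [sub_self, mul_zero, zero_div]
      linarith
    linarith
  refine le_of_forall_pos_le_add fun ε hε => ?_
  have h1 := main ((L * M + G + h * M / τ) / lam + ε / (2 * h)) (by
    have : 0 < ε / (2 * h) := by positivity
    linarith)
  have h2 : ((L * M + G + h * M / τ) / lam + ε / (2 * h)) * (2 * h) =
      2 * h * ((L * M + G + h * M / τ) / lam) + ε := by
    field_simp
  linarith

/-- The absorption step: the term carrying `m` on the right has total weight at most `1/2` once
both sides are multiplied by `ω`. -/
theorem absorb_uxx {lam R S δ ω m Lf Λ : ℝ} (hlam : 0 < lam) (hR : 0 ≤ R) (hδ : 0 < δ)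
    (hδ4 : δ ≤ 1 / 4) (hδlam : δ * (16 * (R * S + 1)) ≤ lam) (hω : 0 < ω) (hωS : ω ≤ S)
    (hm : 0 ≤ m) (hLf : 0 ≤ Lf) (hΛ : 0 ≤ Λ)
    (h : m ≤ 2 * (δ * ω) * ((R * (2 * m) + (Lf + Λ * R + R * (2 * m))
      + δ * ω * (2 * m) / (ω ^ 2 / 2)) / lam) + Λ / (δ * ω)) :
    ω * m ≤ (4 * δ * S ^ 2 * (1 + R) / lam + 2 / δ) * (Lf + Λ) := by
  have h1 : ω * m ≤ ω * (2 * (δ * ω) * ((R * (2 * m) + (Lf + Λ * R + R * (2 * m))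
      + δ * ω * (2 * m) / (ω ^ 2 / 2)) / lam) + Λ / (δ * ω)) := mul_le_mul_of_nonneg_left h hω.le
  have h2 : ω * (2 * (δ * ω) * ((R * (2 * m) + (Lf + Λ * R + R * (2 * m))
      + δ * ω * (2 * m) / (ω ^ 2 / 2)) / lam) + Λ / (δ * ω)) =
      (8 * δ * (R * ω + δ) * (ω * m)) / lam + 2 * δ * ω ^ 2 * (Lf + Λ * R) / lam + Λ / δ := by
    field_simp
    ring
  have hq : 0 ≤ ω * m := by positivity
  have h3 : (8 * δ * (R * ω + δ) * (ω * m)) / lam ≤ (ω * m) / 2 := by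
    rw [div_le_div_iff₀ hlam (by norm_num)]
    have e1 : R * ω + δ ≤ R * S + 1 := by
      have := mul_le_mul_of_nonneg_left hωS hR
      linarith
    have e2 : δ * (R * ω + δ) ≤ δ * (R * S + 1) := mul_le_mul_of_nonneg_left e1 hδ.le
    have e3 : 16 * (δ * (R * ω + δ)) ≤ lam := by linarith
    have := mul_le_mul_of_nonneg_right e3 hq
    linarith
  have h4 : 2 * δ * ω ^ 2 * (Lf + Λ * R) / lam ≤ 2 * δ * S ^ 2 * ((1 + R) * (Lf + Λ)) / lam := by
    have e1 : ω ^ 2 ≤ S ^ 2 := pow_le_pow_left₀ hω.le hωS 2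
    have e2 : Lf + Λ * R ≤ (1 + R) * (Lf + Λ) := by
      have := mul_nonneg hR hLf
      linarith
    gcongr
  have h5 : Λ / δ ≤ (Lf + Λ) / δ := by
    gcongr
    linarith
  have h6 : (4 * δ * S ^ 2 * (1 + R) / lam + 2 / δ) * (Lf + Λ) =
      2 * (2 * δ * S ^ 2 * ((1 + R) * (Lf + Λ)) / lam + (Lf + Λ) / δ) := by
    field_simp
    ring
  linarith

/-- One-sided bound of `uxx` at `(x₀,t₀)` in terms of a bound `2m` for `|uxx|` on a box of size
`ω` around that point; the lower order term `b ux` is treated as part of the source. -/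
theorem uxx_step {T lam R Lf Λ ω δ m x₀ t₀ : ℝ} (hlam : 0 < lam) (hR : 0 ≤ R)
    (hLf : 0 ≤ Lf) (hΛ : 0 ≤ Λ) (hω : 0 < ω) (hδ : 0 < δ) (hm : 0 ≤ m)
    (hωt : 0 < t₀ - ω ^ 2 / 2) (ht₀ : t₀ ≤ T)
    {u ux uxx ut a b f : ℝ → ℝ → ℝ}
    (hux : ∀ x t, 0 < t → t ≤ T → HasDerivAt (fun y => u y t) (ux x t) x)
    (huxx : ∀ x t, 0 < t → t ≤ T → HasDerivAt (fun y => ux y t) (uxx x t) x)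
    (hut : ∀ x t, 0 < t → t ≤ T → HasDerivAt (fun s => u x s) (ut x t) t)
    (hcont : ContinuousOn (fun p : ℝ × ℝ => u p.1 p.2) {p | 0 ≤ p.2 ∧ p.2 ≤ T})
    (ha0 : ∀ x t, 0 ≤ t → t ≤ T → lam ≤ a x t)
    (haL : ∀ x y t, 0 ≤ t → t ≤ T → |a x t - a y t| ≤ R * |x - y|)
    (hbR : ∀ x t, 0 ≤ t → t ≤ T → |b x t| ≤ R)
    (hbL : ∀ x y t, 0 ≤ t → t ≤ T → |b x t - b y t| ≤ R * |x - y|)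
    (hfL : ∀ x y t, 0 ≤ t → t ≤ T → |f x t - f y t| ≤ Lf * |x - y|)
    (heq : ∀ x t, 0 < t → t ≤ T → ut x t = a x t * uxx x t - b x t * ux x t + f x t)
    (hlip : ∀ x y t, 0 ≤ t → t ≤ T → |u x t - u y t| ≤ Λ * |x - y|)
    (hM : ∀ x t, |x - x₀| ≤ 2 * (δ * ω) → t₀ - ω ^ 2 / 2 ≤ t → t ≤ t₀ → |uxx x t| ≤ 2 * m) :
    uxx x₀ t₀ ≤ 2 * (δ * ω) * ((R * (2 * m) + (Lf + Λ * R + R * (2 * m))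
      + δ * ω * (2 * m) / (ω ^ 2 / 2)) / lam) + Λ / (δ * ω) := by
  have hh : 0 < δ * ω := by positivity
  refine uxx_local (T := T) (a := a) (g := fun x t => f x t - b x t * ux x t) hlam hR
    (by positivity) hΛ hh (by positivity) hωt ht₀ hux huxx hut hcont ha0 haL ?_ hlip hM ?_
  · intro x t h0 h1
    rw [heq x t h0 h1]
    ring
  · intro x y t hx hy h0 h1
    have htpos : 0 < t := by linarith
    have htT : t ≤ T := by linarith
    have hΛx : |ux x t| ≤ Λ := by
      have := (hux x t htpos htT).le_of_lip' hΛ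
        (Filter.Eventually.of_forall fun y => hlip y x t htpos.le htT)
      simpa using this
    have hlipx : |ux x t - ux y t| ≤ 2 * m * |x - y| := by
      have := (convex_Icc (x₀ - 2 * (δ * ω)) (x₀ + 2 * (δ * ω))).norm_image_sub_le_of_norm_hasDerivWithin_le
        (f := fun y => ux y t) (f' := fun y => uxx y t) (C := 2 * m) (x := y) (y := x)
        (fun r _ => (huxx r t htpos htT).hasDerivWithinAt)
        (fun r hr => hM r t (by rw [abs_le]; constructor <;> linarith [hr.1, hr.2]) h0 h1)
        (by rw [abs_le] at hy; constructor <;> linarith [hy.1, hy.2])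
        (by rw [abs_le] at hx; constructor <;> linarith [hx.1, hx.2])
      simpa only [Real.norm_eq_abs] using this
    have e0 : f x t - b x t * ux x t - (f y t - b y t * ux y t) =
        (f x t - f y t) - (b x t - b y t) * ux x t - b y t * (ux x t - ux y t) := by ring
    have e1 : |(b x t - b y t) * ux x t| ≤ R * |x - y| * Λ := by
      rw [abs_mul]
      exact mul_le_mul (hbL x y t htpos.le htT) hΛx (abs_nonneg _) (by positivity)
    have e2 : |b y t * (ux x t - ux y t)| ≤ R * (2 * m * |x - y|) := by
      rw [abs_mul]
      exact mul_le_mul (hbR y t htpos.le htT) hlipx (abs_nonneg _) hR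
    have e3 := hfL x y t htpos.le htT
    rw [e0]
    have e4 := abs_sub ((f x t - f y t) - (b x t - b y t) * ux x t) (b y t * (ux x t - ux y t))
    have e5 := abs_sub (f x t - f y t) ((b x t - b y t) * ux x t)
    linarith

/-- Interior bound `√t |uxx| ≤ C (Lf + Λ)` for the second derivative. At a maximum point of
`ω |uxx|`, where `ω` is comparable to the distance to the boundary of a parabolic box, the
one-sided local bounds for `u` and `-u` can be absorbed. -/
theorem uxx_bound {T lam R Lf Λ δ : ℝ} (hlam : 0 < lam) (hR : 0 ≤ R)
    (hLf : 0 ≤ Lf) (hΛ : 0 ≤ Λ) (hδ : 0 < δ) (hδ4 : δ ≤ 1 / 4)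
    (hδlam : δ * (16 * (R * √T + 1)) ≤ lam)
    {u ux uxx ut a b f : ℝ → ℝ → ℝ}
    (hux : ∀ x t, 0 < t → t ≤ T → HasDerivAt (fun y => u y t) (ux x t) x)
    (huxx : ∀ x t, 0 < t → t ≤ T → HasDerivAt (fun y => ux y t) (uxx x t) x)
    (hut : ∀ x t, 0 < t → t ≤ T → HasDerivAt (fun s => u x s) (ut x t) t)
    (hcont : ContinuousOn (fun p : ℝ × ℝ => u p.1 p.2) {p | 0 ≤ p.2 ∧ p.2 ≤ T})
    (hcxx : ContinuousOn (fun p : ℝ × ℝ => uxx p.1 p.2) {p | 0 < p.2 ∧ p.2 ≤ T})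
    (ha0 : ∀ x t, 0 ≤ t → t ≤ T → lam ≤ a x t)
    (haL : ∀ x y t, 0 ≤ t → t ≤ T → |a x t - a y t| ≤ R * |x - y|)
    (hbR : ∀ x t, 0 ≤ t → t ≤ T → |b x t| ≤ R)
    (hbL : ∀ x y t, 0 ≤ t → t ≤ T → |b x t - b y t| ≤ R * |x - y|)
    (hfL : ∀ x y t, 0 ≤ t → t ≤ T → |f x t - f y t| ≤ Lf * |x - y|)
    (heq : ∀ x t, 0 < t → t ≤ T → ut x t = a x t * uxx x t - b x t * ux x t + f x t)
    (hlip : ∀ x y t, 0 ≤ t → t ≤ T → |u x t - u y t| ≤ Λ * |x - y|)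
    {x₁ t₁ : ℝ} (ht₁ : 0 < t₁) (ht₁T : t₁ ≤ T) :
    √t₁ * |uxx x₁ t₁| ≤ 2 * ((4 * δ * √T ^ 2 * (1 + R) / lam + 2 / δ) * (Lf + Λ)) := by
  have hTpos : 0 < T := by linarith
  set S : ℝ := √T with hS
  have hSpos : 0 < S := Real.sqrt_pos.2 hTpos
  set ε : ℝ := 3 * t₁ / 4 with hε
  set ω : ℝ × ℝ → ℝ := fun p => min (√(p.2 - ε)) (S - |p.1 - x₁|) with hω
  have hωc : Continuous ω := by fun_prop
  set K : Set (ℝ × ℝ) := Icc (x₁ - S) (x₁ + S) ×ˢ Icc ε T with hK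
  have hKc : IsCompact K := isCompact_Icc.prod isCompact_Icc
  have hK1 : (x₁, t₁) ∈ K := ⟨⟨by linarith, by linarith⟩, by simp only [hε]; linarith, ht₁T⟩
  have hFc : ContinuousOn (fun p : ℝ × ℝ => ω p * |uxx p.1 p.2|) K := by
    refine hωc.continuousOn.mul (hcxx.mono ?_).abs
    intro p hp
    exact ⟨by have := hp.2.1; simp only [hε] at this; linarith, hp.2.2⟩
  obtain ⟨⟨x₀, t₀⟩, hqK, hq⟩ := hKc.exists_isMaxOn ⟨_, hK1⟩ hFc
  have hω1 : √t₁ = 2 * ω (x₁, t₁) := by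
    have e1 : √(t₁ - ε) = √t₁ / 2 := by
      rw [show t₁ - ε = t₁ / 2 ^ 2 by simp only [hε]; ring, Real.sqrt_div' _ (by norm_num),
        Real.sqrt_sq (by norm_num)]
    have e2 : √t₁ ≤ S := Real.sqrt_le_sqrt ht₁T
    simp only [hω, sub_self, abs_zero, sub_zero, e1]
    rw [min_eq_left (by linarith [Real.sqrt_nonneg t₁])]
    ring
  have hmain : ω (x₀, t₀) * |uxx x₀ t₀| ≤
      (4 * δ * S ^ 2 * (1 + R) / lam + 2 / δ) * (Lf + Λ) := by
    rcases le_or_gt (ω (x₀, t₀)) 0 with h0 | h0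
    · have : ω (x₀, t₀) * |uxx x₀ t₀| ≤ 0 :=
        mul_nonpos_of_nonpos_of_nonneg h0 (abs_nonneg _)
      refine this.trans ?_
      positivity
    set w : ℝ := ω (x₀, t₀) with hw
    set m : ℝ := |uxx x₀ t₀| with hm
    have hw1 : w ≤ √(t₀ - ε) := min_le_left _ _
    have hw2 : w ≤ S - |x₀ - x₁| := min_le_right _ _
    have htε : ε ≤ t₀ := hqK.2.1
    have ht₀T : t₀ ≤ T := hqK.2.2
    have hw3 : w ^ 2 ≤ t₀ - ε := by
      have := pow_le_pow_left₀ h0.le hw1 2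
      rwa [Real.sq_sqrt (by linarith)] at this
    have hwS : w ≤ S := by linarith [abs_nonneg (x₀ - x₁)]
    have hεpos : 0 < ε := by simp only [hε]; linarith
    have hbox : ∀ x t, |x - x₀| ≤ 2 * (δ * w) → t₀ - w ^ 2 / 2 ≤ t → t ≤ t₀ →
        |uxx x t| ≤ 2 * m := by
      intro x t hx h1 h2
      have hδw : δ * w ≤ 1 / 4 * w := mul_le_mul_of_nonneg_right hδ4 h0.le
      have hxd : |x - x₁| ≤ |x₀ - x₁| + w / 2 := by
        have := abs_sub_le x x₀ x₁
        linarith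
      have hxd2 := abs_le.1 (show |x - x₁| ≤ S by linarith)
      have hw20 : 0 < w ^ 2 := by positivity
      have hmem : (x, t) ∈ K := ⟨⟨by linarith [hxd2.1], by linarith [hxd2.2]⟩, by
        change ε ≤ t
        linarith, h2.trans ht₀T⟩
      have hle : ω (x, t) * |uxx x t| ≤ w * m := hq hmem
      have hωge : w / 2 ≤ ω (x, t) := by
        refine le_min ?_ (by change w / 2 ≤ S - |x - x₁|; linarith)
        refine Real.le_sqrt_of_sq_le ?_
        change (w / 2) ^ 2 ≤ t - ε
        linarith [(by ring : (w / 2) ^ 2 = w ^ 2 / 4)]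
      have := mul_le_mul_of_nonneg_right hωge (abs_nonneg (uxx x t))
      have h5 : w * |uxx x t| ≤ w * (2 * m) := by linarith
      exact le_of_mul_le_mul_left h5 h0
    have hωt : 0 < t₀ - w ^ 2 / 2 := by linarith [sq_nonneg w]
    have hm0 : 0 ≤ m := abs_nonneg _
    refine absorb_uxx hlam hR hδ hδ4 hδlam h0 hwS hm0 hLf hΛ ?_
    have s1 := uxx_step hlam hR hLf hΛ h0 hδ hm0 hωt ht₀T hux huxx hut hcont ha0 haL hbR hbL hfL
      heq hlip hbox
    have s2 := uxx_step (u := fun x t => -u x t) (ux := fun x t => -ux x t)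
      (uxx := fun x t => -uxx x t) (ut := fun x t => -ut x t) (f := fun x t => -f x t)
      hlam hR hLf hΛ h0 hδ hm0 hωt ht₀T (fun x t h1 h2 => (hux x t h1 h2).neg)
      (fun x t h1 h2 => (huxx x t h1 h2).neg) (fun x t h1 h2 => (hut x t h1 h2).neg)
      hcont.neg ha0 haL hbR hbL
      (fun x y t h1 h2 => by rw [neg_sub_neg, abs_sub_comm]; exact hfL x y t h1 h2)
      (fun x t h1 h2 => by rw [heq x t h1 h2]; ring)
      (fun x y t h1 h2 => by rw [neg_sub_neg, abs_sub_comm]; exact hlip x y t h1 h2)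
      (fun x t h1 h2 h3 => by rw [abs_neg]; exact hbox x t h1 h2 h3)
    exact abs_le'.2 ⟨s1, s2⟩
  have hfin : ω (x₁, t₁) * |uxx x₁ t₁| ≤ ω (x₀, t₀) * |uxx x₀ t₀| := hq hK1
  rw [hω1]
  linarith

/-! ### The norms -/

theorem HolderClass.exists_inC {T : ℝ} {v : ℝ → ℝ → ℝ}
    (h : HolderClass {p : ℝ × ℝ | 0 ≤ p.2 ∧ p.2 ≤ T} 1 v) : ∃ C, inC T C C v := by
  obtain ⟨C, h1, h2⟩ := h
  refine ⟨C, fun x t h0 hT => h1 (x, t) ⟨h0, hT⟩, fun x t x' t' h0 hT h0' hT' => ?_⟩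
  simpa only [Real.rpow_one] using h2 (x, t) ⟨h0, hT⟩ (x', t') ⟨h0', hT'⟩

theorem inC.sub {T C1 C2 D1 D2 : ℝ} {v w : ℝ → ℝ → ℝ} (hv : inC T C1 C2 v) (hw : inC T D1 D2 w) :
    inC T (C1 + D1) (C2 + D2) (fun x t => v x t - w x t) := by
  refine ⟨fun x t h0 hT => ?_, fun x t x' t' h0 hT h0' hT' => ?_⟩
  · have := abs_sub (v x t) (w x t)
    linarith [hv.1 x t h0 hT, hw.1 x t h0 hT]
  · have e1 := hv.2 x t x' t' h0 hT h0' hT'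
    have e2 := hw.2 x t x' t' h0 hT h0' hT'
    have e3 := abs_sub (v x t - v x' t') (w x t - w x' t')
    rw [show v x t - w x t - (v x' t' - w x' t') = v x t - v x' t' - (w x t - w x' t') by ring]
    linarith

theorem inC.lip {T C1 C2 : ℝ} {v : ℝ → ℝ → ℝ} (hv : inC T C1 C2 v) (x y t : ℝ) (h0 : 0 ≤ t)
    (hT : t ≤ T) : |v x t - v y t| ≤ C2 * |x - y| := by
  have := hv.2 x t y t h0 hT h0 hT
  rwa [sub_self, abs_zero, Real.zero_rpow (by norm_num), add_zero] at this

theorem inC.continuousOn {T C1 C2 : ℝ} {v : ℝ → ℝ → ℝ} (hv : inC T C1 C2 v) :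
    ContinuousOn (fun p : ℝ × ℝ => v p.1 p.2) {p | 0 ≤ p.2 ∧ p.2 ≤ T} := by
  intro p hp
  unfold ContinuousWithinAt
  rw [tendsto_iff_dist_tendsto_zero]
  have hc : Continuous (fun q : ℝ × ℝ => C2 * (|q.1 - p.1| + |q.2 - p.2| ^ (1 / 2 : ℝ))) := by
    have : Continuous (fun q : ℝ × ℝ => |q.2 - p.2| ^ (1 / 2 : ℝ)) :=
      Continuous.rpow_const (by fun_prop) (fun _ => Or.inr (by norm_num))
    fun_prop
  have h0 : Tendsto (fun q : ℝ × ℝ => C2 * (|q.1 - p.1| + |q.2 - p.2| ^ (1 / 2 : ℝ)))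
      (𝓝[{p | 0 ≤ p.2 ∧ p.2 ≤ T}] p) (𝓝 0) := by
    have := (hc.tendsto p).mono_left (nhdsWithin_le_nhds (s := {p | 0 ≤ p.2 ∧ p.2 ≤ T}))
    simpa only [sub_self, abs_zero, Real.zero_rpow (by norm_num : (1 / 2 : ℝ) ≠ 0), add_zero,
      mul_zero] using this
  refine squeeze_zero' (Filter.Eventually.of_forall fun _ => dist_nonneg) ?_ h0
  filter_upwards [self_mem_nhdsWithin] with q hq
  exact hv.2 q.1 q.2 p.1 p.2 hq.1 hq.2 hp.1 hp.2

theorem norm11_nonneg (T : ℝ) (v : ℝ → ℝ → ℝ) : 0 ≤ norm11 T v := by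
  unfold norm11
  refine add_nonneg (Real.sSup_nonneg ?_) (Real.sSup_nonneg ?_)
  · rintro r ⟨x, t, -, -, rfl⟩
    exact abs_nonneg _
  · rintro r ⟨x, t, x', t', -, -, -, -, -, rfl⟩
    positivity

/-- On functions with finite norm, `norm11` bounds the values and the difference quotients. -/
theorem inC.inC_norm11 {T C1 C2 : ℝ} {v : ℝ → ℝ → ℝ} (hv : inC T C1 C2 v) :
    inC T (norm11 T v) (norm11 T v) v := by
  have n1 : 0 ≤ sSup {r : ℝ | ∃ x t, 0 ≤ t ∧ t ≤ T ∧ r = |v x t|} := by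
    refine Real.sSup_nonneg ?_
    rintro r ⟨x, t, -, -, rfl⟩
    exact abs_nonneg _
  have n2 : 0 ≤ sSup {r : ℝ | ∃ x t x' t', 0 ≤ t ∧ t ≤ T ∧ 0 ≤ t' ∧ t' ≤ T ∧ ¬(x = x' ∧ t = t') ∧
      r = |v x t - v x' t'| / (|x - x'| + |t - t'| ^ (1/2 : ℝ))} := by
    refine Real.sSup_nonneg ?_
    rintro r ⟨x, t, x', t', -, -, -, -, -, rfl⟩
    positivity
  have hpos : ∀ x t x' t' : ℝ, ¬(x = x' ∧ t = t') → 0 < |x - x'| + |t - t'| ^ (1/2 : ℝ) := by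
    intro x t x' t' h
    by_cases hx : x = x'
    · have ht : t - t' ≠ 0 := sub_ne_zero.2 fun ht => h ⟨hx, ht⟩
      have := Real.rpow_pos_of_pos (abs_pos.2 ht) (1 / 2)
      have := abs_nonneg (x - x')
      linarith
    · have := abs_pos.2 (sub_ne_zero.2 hx)
      have := Real.rpow_nonneg (abs_nonneg (t - t')) (1 / 2)
      linarith
  refine ⟨fun x t h0 hT => ?_, fun x t x' t' h0 hT h0' hT' => ?_⟩
  · have hb : BddAbove {r : ℝ | ∃ x t, 0 ≤ t ∧ t ≤ T ∧ r = |v x t|} := by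
      refine ⟨C1, ?_⟩
      rintro r ⟨x, t, h0, hT, rfl⟩
      exact hv.1 x t h0 hT
    have := le_csSup hb ⟨x, t, h0, hT, rfl⟩
    unfold norm11
    linarith
  · by_cases h : x = x' ∧ t = t'
    · rw [h.1, h.2]
      simp
    · have hb : BddAbove {r : ℝ | ∃ x t x' t', 0 ≤ t ∧ t ≤ T ∧ 0 ≤ t' ∧ t' ≤ T ∧
          ¬(x = x' ∧ t = t') ∧
          r = |v x t - v x' t'| / (|x - x'| + |t - t'| ^ (1/2 : ℝ))} := by
        refine ⟨C2, ?_⟩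
        rintro r ⟨x, t, x', t', h0, hT, h0', hT', hne, rfl⟩
        exact (div_le_iff₀ (hpos x t x' t' hne)).2 (hv.2 x t x' t' h0 hT h0' hT')
      have := le_csSup hb ⟨x, t, x', t', h0, hT, h0', hT', h, rfl⟩
      rw [div_le_iff₀ (hpos x t x' t' h)] at this
      refine this.trans (mul_le_mul_of_nonneg_right ?_ (hpos x t x' t' h).le)
      unfold norm11
      linarith

theorem norm11_le {T C1 C2 : ℝ} {v : ℝ → ℝ → ℝ} (h1 : 0 ≤ C1) (h2 : 0 ≤ C2) (hv : inC T C1 C2 v) :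
    norm11 T v ≤ C1 + C2 := by
  unfold norm11
  refine add_le_add (Real.sSup_le ?_ h1) (Real.sSup_le ?_ h2)
  · rintro r ⟨x, t, h0, hT, rfl⟩
    exact hv.1 x t h0 hT
  · rintro r ⟨x, t, x', t', h0, hT, h0', hT', -, rfl⟩
    exact div_le_of_le_mul₀ (by positivity) h2 (hv.2 x t x' t' h0 hT h0' hT')

theorem norm1_nonneg (g : ℝ → ℝ) : 0 ≤ norm1 g := by
  unfold norm1
  refine add_nonneg (Real.sSup_nonneg ?_) (Real.sSup_nonneg ?_)
  · rintro r ⟨x, rfl⟩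
    exact abs_nonneg _
  · rintro r ⟨x, x', -, rfl⟩
    positivity

theorem norm1_bounds {g : ℝ → ℝ} {C L : ℝ} (hC : ∀ x, |g x| ≤ C)
    (hL : ∀ x x', |g x - g x'| ≤ L * |x - x'|) :
    (∀ x, |g x| ≤ norm1 g) ∧ ∀ x x', |g x - g x'| ≤ norm1 g * |x - x'| := by
  have n1 : 0 ≤ sSup {r : ℝ | ∃ x, r = |g x|} := by
    refine Real.sSup_nonneg ?_
    rintro r ⟨x, rfl⟩
    exact abs_nonneg _
  have n2 : 0 ≤ sSup {r : ℝ | ∃ x x', x ≠ x' ∧ r = |g x - g x'| / |x - x'|} := by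
    refine Real.sSup_nonneg ?_
    rintro r ⟨x, x', -, rfl⟩
    positivity
  refine ⟨fun x => ?_, fun x x' => ?_⟩
  · have hb : BddAbove {r : ℝ | ∃ x, r = |g x|} := by
      refine ⟨C, ?_⟩
      rintro r ⟨x, rfl⟩
      exact hC x
    have := le_csSup hb ⟨x, rfl⟩
    unfold norm1
    linarith
  · by_cases h : x = x'
    · rw [h]
      simp
    · have hb : BddAbove {r : ℝ | ∃ x x', x ≠ x' ∧ r = |g x - g x'| / |x - x'|} := by
        refine ⟨L, ?_⟩
        rintro r ⟨x, x', hne, rfl⟩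
        exact (div_le_iff₀ (abs_pos.2 (sub_ne_zero.2 hne))).2 (hL x x')
      have := le_csSup hb ⟨x, x', h, rfl⟩
      rw [div_le_iff₀ (abs_pos.2 (sub_ne_zero.2 h))] at this
      refine this.trans (mul_le_mul_of_nonneg_right ?_ (abs_nonneg _))
      unfold norm1
      linarith

/-- The consequences of membership in `B(R,λ,1)` used below. -/
theorem memB.bounds {T R lam : ℝ} {a b : ℝ → ℝ → ℝ} (h : memB T R lam a b) :
    (∀ x t, 0 ≤ t → t ≤ T → a x t ≤ R) ∧
    (∀ x t, 0 ≤ t → t ≤ T → |b x t| ≤ R) ∧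
    (∀ x y t, 0 ≤ t → t ≤ T → |a x t - a y t| ≤ R * |x - y|) ∧
    (∀ x y t, 0 ≤ t → t ≤ T → |b x t - b y t| ≤ R * |x - y|) := by
  obtain ⟨-, ⟨A1, A2, hA1, hA2, hA, ha⟩, ⟨B1, B2, hB1, hB2, hB, hb⟩⟩ := h
  refine ⟨fun x t h0 hT => ?_, fun x t h0 hT => ?_, fun x y t h0 hT => ?_, fun x y t h0 hT => ?_⟩
  · linarith [(abs_le.1 (ha.1 x t h0 hT)).2]
  · linarith [hb.1 x t h0 hT]
  · exact (ha.lip x y t h0 hT).trans (mul_le_mul_of_nonneg_right (by linarith) (abs_nonneg _))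
  · exact (hb.lip x y t h0 hT).trans (mul_le_mul_of_nonneg_right (by linarith) (abs_nonneg _))

/-! ### The estimate for the Cauchy problem -/

/-- The spatial Lipschitz constant `e^{RT} (M₀ + 2G/c)`, `c = min (1/8) (λ/2)`, of a solution with
initial Lipschitz constant `M₀` and source bounded by `G / √t`. -/
noncomputable def lipConst (T R lam M₀ G : ℝ) : ℝ :=
  Real.exp (R * T) * (M₀ + 2 * G / min (1 / 8) (lam / 2))

theorem lipConst_nonneg {T R lam M₀ G : ℝ} (hlam : 0 < lam) (hM₀ : 0 ≤ M₀) (hG : 0 ≤ G) :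
    0 ≤ lipConst T R lam M₀ G := by
  have : 0 < min (1 / 8) (lam / 2) := lt_min (by norm_num) (by positivity)
  unfold lipConst
  positivity

theorem lip_abs {T lam R G M₀ Cw : ℝ} (hlam : 0 < lam) (hR : 0 ≤ R)
    (hG : 0 ≤ G) (hM₀ : 0 ≤ M₀)
    {w wxx wx wt a b g : ℝ → ℝ → ℝ}
    (hwx : ∀ x t, 0 < t → t ≤ T → HasDerivAt (fun y => w y t) (wx x t) x)
    (hwxx : ∀ x t, 0 < t → t ≤ T → HasDerivAt (fun y => wx y t) (wxx x t) x)
    (hwt : ∀ x t, 0 < t → t ≤ T → HasDerivAt (fun s => w x s) (wt x t) t)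
    (hcont : ContinuousOn (fun p : ℝ × ℝ => w p.1 p.2) {p | 0 ≤ p.2 ∧ p.2 ≤ T})
    (hbd : ∀ x t, 0 ≤ t → t ≤ T → |w x t| ≤ Cw)
    (ha0 : ∀ x t, 0 ≤ t → t ≤ T → lam ≤ a x t) (haR : ∀ x t, 0 ≤ t → t ≤ T → a x t ≤ R)
    (hbR : ∀ x t, 0 ≤ t → t ≤ T → |b x t| ≤ R)
    (hbL : ∀ x y t, 0 ≤ t → t ≤ T → |b x t - b y t| ≤ R * |x - y|)
    (heq : ∀ x t, 0 < t → t ≤ T → wt x t = a x t * wxx x t - b x t * wx x t + g x t)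
    (hg : ∀ x t, 0 < t → t ≤ T → |g x t| ≤ G / √t)
    (hstart : ∀ x y, |w x 0 - w y 0| ≤ M₀ * |x - y|)
    (x y t : ℝ) (ht : 0 ≤ t) (htT : t ≤ T) :
    |w x t - w y t| ≤ lipConst T R lam M₀ G * |x - y| := by
  have main : ∀ x y, y ≤ x → |w x t - w y t| ≤ lipConst T R lam M₀ G * |x - y| := by
    intro x y hxy
    rw [abs_of_nonneg (by linarith : 0 ≤ x - y)]
    have s1 := lip_upper hlam hR hR hG hM₀ hwx hwxx hwt hcont hbd ha0 haR hbR hbL heq hg hstart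
      hxy ht htT
    have s2 := lip_upper (w := fun x t => -w x t) (wx := fun x t => -wx x t)
      (wxx := fun x t => -wxx x t) (wt := fun x t => -wt x t) (g := fun x t => -g x t)
      hlam hR hR hG hM₀ (fun x t h1 h2 => (hwx x t h1 h2).neg)
      (fun x t h1 h2 => (hwxx x t h1 h2).neg) (fun x t h1 h2 => (hwt x t h1 h2).neg)
      hcont.neg (fun x t h1 h2 => by rw [abs_neg]; exact hbd x t h1 h2) ha0 haR hbR hbL
      (fun x t h1 h2 => by rw [heq x t h1 h2]; ring)
      (fun x t h1 h2 => by rw [abs_neg]; exact hg x t h1 h2)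
      (fun x y => by rw [neg_sub_neg, abs_sub_comm]; exact hstart x y) hxy ht htT
    unfold lipConst
    exact abs_le'.2 ⟨s1, by linarith⟩
  rcases le_total y x with h | h
  · exact main x y h
  · rw [abs_sub_comm, abs_sub_comm x y]
    exact main y x h

/-- The `C^{1,1/2}` estimate for a Cauchy problem whose source is of order `t^{-1/2}`. The drift
term, bounded by `R Λ`, is moved to the source in the time estimate. -/
theorem cauchy_estimate {T lam R G M₀ Cw : ℝ} (hT : 0 ≤ T) (hlam : 0 < lam) (hR : 0 ≤ R)
    (hG : 0 ≤ G) (hM₀ : 0 ≤ M₀)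
    {w wxx wx wt a b g : ℝ → ℝ → ℝ}
    (hwx : ∀ x t, 0 < t → t ≤ T → HasDerivAt (fun y => w y t) (wx x t) x)
    (hwxx : ∀ x t, 0 < t → t ≤ T → HasDerivAt (fun y => wx y t) (wxx x t) x)
    (hwt : ∀ x t, 0 < t → t ≤ T → HasDerivAt (fun s => w x s) (wt x t) t)
    (hcont : ContinuousOn (fun p : ℝ × ℝ => w p.1 p.2) {p | 0 ≤ p.2 ∧ p.2 ≤ T})
    (hbd : ∀ x t, 0 ≤ t → t ≤ T → |w x t| ≤ Cw)
    (ha0 : ∀ x t, 0 ≤ t → t ≤ T → lam ≤ a x t) (haR : ∀ x t, 0 ≤ t → t ≤ T → a x t ≤ R)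
    (hbR : ∀ x t, 0 ≤ t → t ≤ T → |b x t| ≤ R)
    (hbL : ∀ x y t, 0 ≤ t → t ≤ T → |b x t - b y t| ≤ R * |x - y|)
    (heq : ∀ x t, 0 < t → t ≤ T → wt x t = a x t * wxx x t - b x t * wx x t + g x t)
    (hg : ∀ x t, 0 < t → t ≤ T → |g x t| ≤ G / √t)
    (hstart0 : ∀ x, |w x 0| ≤ M₀)
    (hstart : ∀ x y, |w x 0 - w y 0| ≤ M₀ * |x - y|)
    {Λ H : ℝ} (hΛ : Λ = lipConst T R lam M₀ G)
    (hH : H = Λ * (1 + R) + 2 * (G + R * Λ * √T)) :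
    norm11 T w ≤ (M₀ + H * √T) + (Λ + H) := by
  have hΛ0 : 0 ≤ Λ := hΛ ▸ lipConst_nonneg hlam hM₀ hG
  have hH0 : 0 ≤ H := by rw [hH]; positivity
  have hlip : ∀ x y t, 0 ≤ t → t ≤ T → |w x t - w y t| ≤ Λ * |x - y| := by
    intro x y t h0 h1
    rw [hΛ]
    exact lip_abs hlam hR hG hM₀ hwx hwxx hwt hcont hbd ha0 haR hbR hbL heq hg hstart x y t h0 h1
  have hg2 : ∀ x t, 0 < t → t ≤ T → |g x t - b x t * wx x t| ≤ (G + R * Λ * √T) / √t := by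
    intro x t h0 h1
    have hwΛ : |wx x t| ≤ Λ := by
      have := (hwx x t h0 h1).le_of_lip' hΛ0
        (Filter.Eventually.of_forall fun y => hlip y x t h0.le h1)
      simpa using this
    have e1 : |b x t * wx x t| ≤ R * Λ := by
      rw [abs_mul]
      exact mul_le_mul (hbR x t h0.le h1) hwΛ (abs_nonneg _) hR
    have e2 : R * Λ ≤ R * Λ * √T / √t := by
      rw [le_div_iff₀ (Real.sqrt_pos.2 h0)]
      exact mul_le_mul_of_nonneg_left (Real.sqrt_le_sqrt h1) (by positivity)
    have e3 := abs_sub (g x t) (b x t * wx x t)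
    rw [add_div]
    linarith [hg x t h0 h1]
  have htime : ∀ x t t', 0 ≤ t → t < t' → t' ≤ T → |w x t' - w x t| ≤ H * √(t' - t) := by
    intro x t t' h0 h1 h2
    have ha : ∀ x t, 0 ≤ t → t ≤ T → 0 ≤ a x t := fun x t h0 h1 =>
      hlam.le.trans (ha0 x t h0 h1)
    have s1 := time_holder_upper (g := fun x t => g x t - b x t * wx x t) hR
      (by positivity : 0 ≤ G + R * Λ * √T) hΛ0 hwx hwxx hwt hcont hbd ha haR
      (fun x t h1 h2 => by rw [heq x t h1 h2]; ring) hg2 hlip x h0 h1 h2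
    have s2 := time_holder_upper (w := fun x t => -w x t) (wx := fun x t => -wx x t)
      (wxx := fun x t => -wxx x t) (wt := fun x t => -wt x t)
      (g := fun x t => -(g x t - b x t * wx x t)) hR
      (by positivity : 0 ≤ G + R * Λ * √T) hΛ0 (fun x t h1 h2 => (hwx x t h1 h2).neg)
      (fun x t h1 h2 => (hwxx x t h1 h2).neg) (fun x t h1 h2 => (hwt x t h1 h2).neg)
      hcont.neg (fun x t h1 h2 => by rw [abs_neg]; exact hbd x t h1 h2) ha haR
      (fun x t h1 h2 => by rw [heq x t h1 h2]; ring)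
      (fun x t h1 h2 => by rw [abs_neg]; exact hg2 x t h1 h2)
      (fun x y t h1 h2 => by rw [neg_sub_neg, abs_sub_comm]; exact hlip x y t h1 h2) x h0 h1 h2
    rw [hH]
    exact abs_le'.2 ⟨s1, by linarith⟩
  have htime2 : ∀ x t t', 0 ≤ t → t ≤ T → 0 ≤ t' → t' ≤ T →
      |w x t - w x t'| ≤ H * |t - t'| ^ (1 / 2 : ℝ) := by
    intro x t t' h0 h1 h0' h1'
    rw [← Real.sqrt_eq_rpow]
    rcases lt_trichotomy t t' with h | h | h
    · rw [abs_sub_comm, abs_sub_comm t, abs_of_pos (by linarith : 0 < t' - t)]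
      exact htime x t t' h0 h h1'
    · rw [h]
      simp
    · rw [abs_of_pos (by linarith : 0 < t - t')]
      exact htime x t' t h0' h h1
  refine norm11_le (by positivity) (by positivity) ⟨fun x t h0 h1 => ?_,
    fun x t x' t' h0 h1 h0' h1' => ?_⟩
  · have e1 := htime2 x t 0 h0 h1 le_rfl hT
    rw [sub_zero, abs_of_nonneg h0, ← Real.sqrt_eq_rpow] at e1
    have e2 : H * √t ≤ H * √T := mul_le_mul_of_nonneg_left (Real.sqrt_le_sqrt h1) hH0
    have e3 := abs_sub_abs_le_abs_sub (w x t) (w x 0)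
    linarith [hstart0 x]
  · have e1 := htime2 x' t t' h0 h1 h0' h1'
    have e2 := hlip x x' t h0 h1
    have e3 := abs_sub_le (w x t) (w x' t) (w x' t')
    have e4 : 0 ≤ H * |x - x'| := by positivity
    have e5 : 0 ≤ Λ * |t - t'| ^ (1 / 2 : ℝ) := by positivity
    linarith

/-- The constants in the final estimate: `S = √T`, `Cc` is the constant of the second derivative
bound, `Λu` the Lipschitz constant of `u`, `G` the size of the source of the difference. -/
theorem final_algebra {S R e c Cc N Fn Fd D Db M₀ Λu Λw H G : ℝ} (hS : 0 < S) (hR : 0 ≤ R)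
    (he : 0 ≤ e) (hc : 0 < c) (hCc : 0 ≤ Cc) (hN : 0 ≤ N) (hFn : 0 ≤ Fn) (hFd : 0 ≤ Fd)
    (hD : 0 ≤ D) (hDb : 0 ≤ Db) (hM₀ : 0 ≤ M₀)
    (hΛu : Λu = e * (N + 2 * (S * Fn) / c))
    (hG : G = S * Fd + D * (2 * (Cc * (Fn + Λu))) + S * (D * Λu))
    (hΛw : Λw = e * (M₀ + 2 * G / c))
    (hH : H = Λw * (1 + R) + 2 * (G + R * Λw * S)) :
    (M₀ + H * S) + (Λw + H) ≤
      ((1 + ((e * (1 + 2 / c)) * (1 + R + 2 * R * S) + 2) * (S + 1) + e * (1 + 2 / c)) *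
        (1 + (2 * Cc * (1 + e * (N + 2 * S / c)) + S * (e * (N + 2 * S / c))) / S)) *
      (D + Db + M₀ + S * (Fn + 1) * (Fd + D + Db)) := by
  set k1 : ℝ := e * (1 + 2 / c) with hk1
  set k2 : ℝ := k1 * (1 + R + 2 * R * S) + 2 with hk2
  set k3 : ℝ := 1 + k2 * (S + 1) + k1 with hk3
  set k4 : ℝ := e * (N + 2 * S / c) with hk4
  set k5 : ℝ := 2 * Cc * (1 + k4) + S * k4 with hk5
  have p1 : 0 ≤ k1 := by positivity
  have p2 : 0 ≤ k2 := by positivity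
  have p3 : 0 ≤ k3 := by positivity
  have p4 : 0 ≤ k4 := by positivity
  have p5 : 0 ≤ k5 := by positivity
  have pΛ : 0 ≤ Λu := by rw [hΛu]; positivity
  have pG : 0 ≤ G := by rw [hG]; positivity
  have q4 : Λu ≤ k4 * (Fn + 1) := by
    have h1 : k4 * (Fn + 1) - Λu = e * (N * Fn) + e * (2 * S / c) := by
      rw [hΛu, hk4]; ring
    have h2 : 0 ≤ e * (N * Fn) + e * (2 * S / c) := by positivity
    linarith
  have q5 : G ≤ S * Fd + D * (Fn + 1) * k5 := by
    have h1 : D * (2 * (Cc * (Fn + Λu))) ≤ D * (2 * (Cc * ((Fn + 1) + k4 * (Fn + 1)))) := by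
      gcongr
      linarith
    have h2 : S * (D * Λu) ≤ S * (D * (k4 * (Fn + 1))) := by gcongr
    have h3 : D * (Fn + 1) * k5 = D * (2 * (Cc * ((Fn + 1) + k4 * (Fn + 1))))
        + S * (D * (k4 * (Fn + 1))) := by rw [hk5]; ring
    linarith
  set X : ℝ := S * (Fn + 1) * (Fd + D) with hX
  have pX : 0 ≤ X := by positivity
  have q6 : G ≤ (1 + k5 / S) * X := by
    have h1 : (1 + k5 / S) * X = S * Fd + D * (Fn + 1) * k5 +
        (S * Fn * Fd + S * (Fn + 1) * D + k5 * (Fn + 1) * Fd) := by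
      rw [hX]; field_simp; ring
    have h2 : 0 ≤ S * Fn * Fd + S * (Fn + 1) * D + k5 * (Fn + 1) * Fd := by positivity
    linarith
  have q1 : Λw ≤ k1 * (M₀ + G) := by
    have h1 : k1 * (M₀ + G) - Λw = e * G + e * (2 / c * M₀) := by rw [hΛw, hk1]; ring
    have h2 : 0 ≤ e * G + e * (2 / c * M₀) := by positivity
    linarith
  have q2 : H ≤ k2 * (M₀ + G) := by
    have h1 : Λw * (1 + R + 2 * R * S) ≤ k1 * (M₀ + G) * (1 + R + 2 * R * S) :=
      mul_le_mul_of_nonneg_right q1 (by positivity)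
    have h2 : H = Λw * (1 + R + 2 * R * S) + 2 * G := by rw [hH]; ring
    have h3 : k2 * (M₀ + G) = k1 * (M₀ + G) * (1 + R + 2 * R * S) + 2 * (M₀ + G) := by
      rw [hk2]; ring
    linarith
  have q3 : (M₀ + H * S) + (Λw + H) ≤ k3 * (M₀ + G) := by
    have h1 : H * (S + 1) ≤ k2 * (M₀ + G) * (S + 1) := mul_le_mul_of_nonneg_right q2 (by positivity)
    have h2 : k3 * (M₀ + G) = (M₀ + G) + k2 * (M₀ + G) * (S + 1) + k1 * (M₀ + G) := by
      rw [hk3]; ring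
    linarith
  have q7 : M₀ + G ≤ (1 + k5 / S) * (D + Db + M₀ + S * (Fn + 1) * (Fd + D + Db)) := by
    have h1 : (1 + k5 / S) * (D + Db + M₀ + S * (Fn + 1) * (Fd + D + Db)) =
        M₀ + (1 + k5 / S) * X + (k5 / S * M₀ + (1 + k5 / S) * (D + Db + S * (Fn + 1) * Db)) := by
      rw [hX]; ring
    have h2 : 0 ≤ k5 / S * M₀ + (1 + k5 / S) * (D + Db + S * (Fn + 1) * Db) := by positivity
    linarith
  calc (M₀ + H * S) + (Λw + H) ≤ k3 * (M₀ + G) := q3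
    _ ≤ k3 * ((1 + k5 / S) * (D + Db + M₀ + S * (Fn + 1) * (Fd + D + Db))) :=
      mul_le_mul_of_nonneg_left q7 p3
    _ = _ := by ring

end Estimates

/-- Theorem: continuous dependence of the solution of the linear Cauchy
problem on the coefficients, the source term and the initial data. -/
theorem solution_dependence
    (T R lam β N : ℝ) (hT : 0 < T) (hR : 0 < R) (hlam : 0 < lam) (hlR : lam < R)
    (hβ0 : 0 < β) (hβ1 : β < 1) (hN : 0 ≤ N) :
    ∃ K : ℝ, 0 < K ∧
      ∀ a b abar bbar : ℝ → ℝ → ℝ,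
        memB T R lam a b → memB T R lam abar bbar →
        ∀ f fbar : ℝ → ℝ → ℝ,
          HolderClass {p : ℝ × ℝ | 0 ≤ p.2 ∧ p.2 ≤ T} 1 f →
          HolderClass {p : ℝ × ℝ | 0 ≤ p.2 ∧ p.2 ≤ T} 1 fbar →
          ∀ u0 ubar0 : ℝ → ℝ,
            (∃ L, ∀ x x', |u0 x - u0 x'| ≤ L * |x - x'|) →
            (∃ C, ∀ x, |u0 x| ≤ C) →
            (∃ L, ∀ x x', |ubar0 x - ubar0 x'| ≤ L * |x - x'|) →
            (∃ C, ∀ x, |ubar0 x| ≤ C) →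
            norm1 u0 ≤ N →
            ∀ u ubar : ℝ → ℝ → ℝ,
              IsSolLin T a b f u0 u → IsSolLin T abar bbar fbar ubar0 ubar →
              norm11 T (fun x t => u x t - ubar x t) ≤
                K * (vDist T a b abar bbar + vDist T a b abar bbar ^ β +
                  norm1 (fun x => u0 x - ubar0 x) +
                  T ^ (1/2 : ℝ) * (norm11 T f + 1) *
                    (norm11 T (fun x t => f x t - fbar x t) +
                      vDist T a b abar bbar + vDist T a b abar bbar ^ β)) := by
  set S : ℝ := √T with hS
  have hSpos : 0 < S := Real.sqrt_pos.2 hT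
  set c : ℝ := min (1 / 8) (lam / 2) with hc
  have hcpos : 0 < c := lt_min (by norm_num) (by positivity)
  set e : ℝ := Real.exp (R * T) with he
  have hepos : 0 < e := Real.exp_pos _
  -- the size of the box, relative to `ω`, in the second derivative bound
  set δ : ℝ := min (1 / 4) (lam / (16 * (R * S + 1))) with hδ
  have hδpos : 0 < δ := lt_min (by norm_num) (by positivity)
  have hδ4 : δ ≤ 1 / 4 := min_le_left _ _
  have hδlam : δ * (16 * (R * S + 1)) ≤ lam :=
    (le_div_iff₀ (by positivity)).1 (min_le_right _ _)
  set Cc : ℝ := 4 * δ * S ^ 2 * (1 + R) / lam + 2 / δ with hCc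
  have hCcpos : 0 < Cc := by positivity
  refine ⟨(1 + ((e * (1 + 2 / c)) * (1 + R + 2 * R * S) + 2) * (S + 1) + e * (1 + 2 / c)) *
        (1 + (2 * Cc * (1 + e * (N + 2 * S / c)) + S * (e * (N + 2 * S / c))) / S),
        by positivity, ?_⟩
  intro a b abar bbar hab habar f fbar hf hfbar u0 ubar0 hu0L hu0C hubar0L hubar0C hu0N u ubar
    hu hubar
  obtain ⟨⟨hud, -, -, huxxc, -⟩, huH, hu_start, hu_eq⟩ := hu
  obtain ⟨⟨hvd, -, -, -, -⟩, hvH, hv_start, hv_eq⟩ := hubar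
  obtain ⟨Cu, hCu⟩ := huH.exists_inC
  obtain ⟨Cv, hCv⟩ := hvH.exists_inC
  obtain ⟨Cf, hCf⟩ := hf.exists_inC
  obtain ⟨Cg, hCg⟩ := hfbar.exists_inC
  obtain ⟨haR, hbR, haL, hbL⟩ := hab.bounds
  obtain ⟨havR, hbvR, -, hbvL⟩ := habar.bounds
  have hF := hCf.inC_norm11
  have hFd := (hCf.sub hCg).inC_norm11
  obtain ⟨ha0, ⟨_, _, _, _, _, haC⟩, ⟨_, _, _, _, _, hbC⟩⟩ := hab
  obtain ⟨hav0, ⟨_, _, _, _, _, havC⟩, ⟨_, _, _, _, _, hbvC⟩⟩ := habar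
  have hDa := (haC.sub havC).inC_norm11.1
  have hDb := (hbC.sub hbvC).inC_norm11.1
  set D : ℝ := vDist T a b abar bbar with hD
  have hDa2 : ∀ x t, 0 ≤ t → t ≤ T → |a x t - abar x t| ≤ D := fun x t h0 h1 =>
    (hDa x t h0 h1).trans (le_max_left _ _)
  have hDb2 : ∀ x t, 0 ≤ t → t ≤ T → |b x t - bbar x t| ≤ D := fun x t h0 h1 =>
    (hDb x t h0 h1).trans (le_max_right _ _)
  have hD0 : 0 ≤ D := (norm11_nonneg T _).trans (le_max_left _ _)
  set Fn : ℝ := norm11 T f with hFn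
  have hFn0 : 0 ≤ Fn := norm11_nonneg T _
  set Fd : ℝ := norm11 T (fun x t => f x t - fbar x t) with hFdd
  have hFd0 : 0 ≤ Fd := norm11_nonneg T _
  set M₀ : ℝ := norm1 (fun x => u0 x - ubar0 x) with hM
  have hM0 : 0 ≤ M₀ := norm1_nonneg _
  obtain ⟨L1, hL1⟩ := hu0L
  obtain ⟨C1, hC1⟩ := hu0C
  obtain ⟨L2, hL2⟩ := hubar0L
  obtain ⟨C2, hC2⟩ := hubar0C
  have hu0 := (norm1_bounds hC1 hL1).2
  have hw0 := norm1_bounds (g := fun x => u0 x - ubar0 x) (C := C1 + C2) (L := L1 + L2)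
    (fun x => (abs_sub _ _).trans (add_le_add (hC1 x) (hC2 x))) (fun x y => by
      have e1 := abs_sub (u0 x - u0 y) (ubar0 x - ubar0 y)
      rw [show u0 x - ubar0 x - (u0 y - ubar0 y) = u0 x - u0 y - (ubar0 x - ubar0 y) by ring]
      linarith [hL1 x y, hL2 x y])
  have hux : ∀ x t, 0 < t → t ≤ T → HasDerivAt (fun y => u y t) (pdX u x t) x :=
    fun x t h0 h1 => (hud (x, t) ⟨h0, h1⟩).1.hasDerivAt
  have huxx : ∀ x t, 0 < t → t ≤ T → HasDerivAt (fun y => pdX u y t) (pdXX u x t) x :=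
    fun x t h0 h1 => (hud (x, t) ⟨h0, h1⟩).2.1.hasDerivAt
  have hut : ∀ x t, 0 < t → t ≤ T → HasDerivAt (fun s => u x s) (pdT u x t) t :=
    fun x t h0 h1 => (hud (x, t) ⟨h0, h1⟩).2.2.hasDerivAt
  have hvx : ∀ x t, 0 < t → t ≤ T → HasDerivAt (fun y => ubar y t) (pdX ubar x t) x :=
    fun x t h0 h1 => (hvd (x, t) ⟨h0, h1⟩).1.hasDerivAt
  have hvxx : ∀ x t, 0 < t → t ≤ T → HasDerivAt (fun y => pdX ubar y t) (pdXX ubar x t) x :=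
    fun x t h0 h1 => (hvd (x, t) ⟨h0, h1⟩).2.1.hasDerivAt
  have hvt : ∀ x t, 0 < t → t ≤ T → HasDerivAt (fun s => ubar x s) (pdT ubar x t) t :=
    fun x t h0 h1 => (hvd (x, t) ⟨h0, h1⟩).2.2.hasDerivAt
  have hscale : ∀ C t, 0 ≤ C → 0 < t → t ≤ T → C ≤ S * C / √t := by
    intro C t hC h0 h1
    rw [le_div_iff₀ (Real.sqrt_pos.2 h0), mul_comm]
    exact mul_le_mul_of_nonneg_right (Real.sqrt_le_sqrt h1) hC
  set Λu : ℝ := lipConst T R lam N (S * Fn) with hΛu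
  have hΛu0 : 0 ≤ Λu := lipConst_nonneg hlam hN (by positivity)
  have hueq : ∀ x t, 0 < t → t ≤ T →
      pdT u x t = a x t * pdXX u x t - b x t * pdX u x t + f x t := fun x t h0 h1 => by
    linarith [hu_eq x t h0 h1]
  have hulip : ∀ x y t, 0 ≤ t → t ≤ T → |u x t - u y t| ≤ Λu * |x - y| :=
    lip_abs hlam hR.le (by positivity) hN hux huxx hut hCu.continuousOn hCu.1 ha0 haR hbR hbL
      hueq (fun x t h0 h1 => (hF.1 x t h0.le h1).trans (hscale Fn t hFn0 h0 h1))
      (fun x y => by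
        rw [hu_start, hu_start]
        exact (hu0 x y).trans (mul_le_mul_of_nonneg_right hu0N (abs_nonneg _)))
  have hux_bd : ∀ x t, 0 < t → t ≤ T → |pdX u x t| ≤ Λu := by
    intro x t h0 h1
    have := (hux x t h0 h1).le_of_lip' hΛu0
      (Filter.Eventually.of_forall fun y => hulip y x t h0.le h1)
    simpa using this
  have huxx_bd : ∀ x t, 0 < t → t ≤ T → √t * |pdXX u x t| ≤ 2 * (Cc * (Fn + Λu)) :=
    fun x t h0 h1 => uxx_bound hlam hR.le hFn0 hΛu0 hδpos hδ4 hδlam hux huxx hut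
      hCu.continuousOn huxxc ha0 haL hbR hbL hF.lip hueq hulip h0 h1
  set G : ℝ := S * Fd + D * (2 * (Cc * (Fn + Λu))) + S * (D * Λu) with hG
  have hG0 : 0 ≤ G := by positivity
  -- the difference solves the barred equation with the defect of the coefficients as source
  have hest := cauchy_estimate (w := fun x t => u x t - ubar x t)
    (wx := fun x t => pdX u x t - pdX ubar x t) (wxx := fun x t => pdXX u x t - pdXX ubar x t)
    (wt := fun x t => pdT u x t - pdT ubar x t) (a := abar) (b := bbar)
    (g := fun x t => (f x t - fbar x t) + (a x t - abar x t) * pdXX u x t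
      - (b x t - bbar x t) * pdX u x t) hT.le hlam hR.le hG0 hM0
    (fun x t h0 h1 => (hux x t h0 h1).sub (hvx x t h0 h1))
    (fun x t h0 h1 => (huxx x t h0 h1).sub (hvxx x t h0 h1))
    (fun x t h0 h1 => (hut x t h0 h1).sub (hvt x t h0 h1))
    (hCu.continuousOn.sub hCv.continuousOn) (hCu.sub hCv).1 hav0 havR hbvR hbvL
    (fun x t h0 h1 => by linarith [hu_eq x t h0 h1, hv_eq x t h0 h1])
    (fun x t h0 h1 => by
      have hst := Real.sqrt_pos.2 h0
      have e1 := (hFd.1 x t h0.le h1).trans (hscale Fd t hFd0 h0 h1)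
      have e2 : |(a x t - abar x t) * pdXX u x t| ≤ D * (2 * (Cc * (Fn + Λu))) / √t := by
        rw [abs_mul, le_div_iff₀ hst, mul_assoc, mul_comm |pdXX u x t|]
        exact mul_le_mul (hDa2 x t h0.le h1) (huxx_bd x t h0 h1) (by positivity) hD0
      have e3 : |(b x t - bbar x t) * pdX u x t| ≤ S * (D * Λu) / √t := by
        refine le_trans ?_ (hscale (D * Λu) t (by positivity) h0 h1)
        rw [abs_mul]
        exact mul_le_mul (hDb2 x t h0.le h1) (hux_bd x t h0 h1) (abs_nonneg _) hD0
      have e4 := abs_sub ((f x t - fbar x t) + (a x t - abar x t) * pdXX u x t)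
        ((b x t - bbar x t) * pdX u x t)
      have e5 := abs_add_le (f x t - fbar x t) ((a x t - abar x t) * pdXX u x t)
      rw [hG, add_div, add_div]
      linarith)
    (fun x => by rw [hu_start, hv_start]; exact hw0.1 x)
    (fun x y => by rw [hu_start, hv_start, hu_start, hv_start]; exact hw0.2 x y) rfl rfl
  refine hest.trans ?_
  rw [← Real.sqrt_eq_rpow]
  exact final_algebra hSpos hR.le hepos.le hcpos hCcpos.le hN hFn0 hFd0 hD0
    (Real.rpow_nonneg hD0 β) hM0 rfl rfl rfl rfl
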